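/- arXiv:2408.13541 — 8 statements merged into one kernel-verified Lean document; each statement's English description precedes it below -/
import Mathlib

section
/- Let c ∈ {-1, 0, 1}, let γ > 0 and p ≥ 1. Set δ(c)/2 = π/2 if c = 1 and δ(c)/2 = +∞ if c ∈ {-1, 0}. Then there exists a constant K > 0, depending only on p, c and γ, such that for every Lebesgue-measurable set E ⊆ (0, δ(c)/2) of finite Lebesgue measure, ∫_E (s_c(t))^{γ - H(c)} dt ≤ K · ( ∫_E (s_c(t))^{p·γ - H(c)} dt )^{1/p}. -/
open MeasureTheory Real Set

/-- The Heaviside function: `H s = 1` if `0 ≤ s`, `0` otherwise. -/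
noncomputable def Hv (s : ℝ) : ℝ := if 0 ≤ s then 1 else 0

/-- The unified sine (curvature) function `s_c`. -/
noncomputable def sc (c t : ℝ) : ℝ :=
  if c = -1 then Real.sinh t else if c = 1 then Real.sin t else t

/-- The domain `(0, δ(X_c)/2)`: `(0, π/2)` for the sphere and `(0, ∞)` otherwise. -/
noncomputable def Dc (c : ℝ) : Set ℝ :=
  if c = 1 then Set.Ioo 0 (Real.pi / 2) else Set.Ioi 0

/-!
With `g = s_c ^ γ` and `dν = s_c ^ (-H(c)) dt`, the claim is `∫ g dν ≤ K (∫ g ^ p dν) ^ (1 / p)`.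
It holds as soon as `∫_{g ≤ r} g dν ≤ C r` for all `r > 0`, with `K = C + 1`: the part of `∫ g dν`
where `g > r` is at most `r ^ (1 - p) ∫ g ^ p dν`, and one takes `r = (∫ g ^ p dν) ^ (1 / p)`.
The sublevel bound comes from `∫ s ^ (γ - 1) s' dt ≤ r ^ γ / γ` over a set where `0 < s ≤ r`,
applied to `sinh` (as `sinh ≤ cosh`) and to the identity; on `(0, π / 2)`, `sin t` is comparable
to `t`.
-/

open scoped ENNReal NNReal

section SublevelGrowth

lemma rpow_sub_one_mul_self {p : ℝ} (hp : 1 ≤ p) (a : ℝ≥0∞) : a ^ (p - 1) * a = a ^ p := by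
  simpa using (ENNReal.rpow_add_of_nonneg (x := a) (p - 1) 1 (by linarith) zero_le_one).symm

variable {α : Type*} [MeasurableSpace α] {μ : Measure α}

lemma rpow_sub_one_mul_setLIntegral_lt_le {g : α → ℝ≥0∞} (hg : Measurable g) {p : ℝ}
    (hp : 1 ≤ p) (r : ℝ≥0∞) :
    r ^ (p - 1) * ∫⁻ x in {x | r < g x}, g x ∂μ ≤ ∫⁻ x, g x ^ p ∂μ := by
  calc r ^ (p - 1) * ∫⁻ x in {x | r < g x}, g x ∂μ
      = ∫⁻ x in {x | r < g x}, r ^ (p - 1) * g x ∂μ := (lintegral_const_mul _ hg).symm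
    _ ≤ ∫⁻ x in {x | r < g x}, g x ^ p ∂μ := by
        refine setLIntegral_mono (hg.pow_const p) fun x hx => ?_
        have hrx : r ≤ g x := hx.le
        rw [← rpow_sub_one_mul_self hp (g x)]
        gcongr
    _ ≤ ∫⁻ x, g x ^ p ∂μ := setLIntegral_le_lintegral _ _

lemma lintegral_le_mul_lintegral_rpow_of_sublevel_le {g : α → ℝ≥0∞} (hg : Measurable g)
    {C : ℝ≥0∞} (hC : ∀ r : ℝ≥0, 0 < r → ∫⁻ x in {x | g x ≤ r}, g x ∂μ ≤ C * r)
    {p : ℝ} (hp : 1 ≤ p) :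
    ∫⁻ x, g x ∂μ ≤ (C + 1) * (∫⁻ x, g x ^ p ∂μ) ^ (1 / p) := by
  have hp_pos : 0 < p := by positivity
  rcases eq_or_ne (∫⁻ x, g x ^ p ∂μ) 0 with hzero | hzero
  · have hg_zero : g =ᵐ[μ] 0 := by
      filter_upwards [(lintegral_eq_zero_iff (hg.pow_const p)).1 hzero] with x hx
      exact (ENNReal.rpow_eq_zero_iff_of_pos hp_pos).1 hx
    simp [lintegral_congr_ae hg_zero]
  rcases eq_or_ne (∫⁻ x, g x ^ p ∂μ) ⊤ with htop | htop
  · simp [htop, hp_pos]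
  obtain ⟨r, hr⟩ : ∃ r : ℝ≥0, (r : ℝ≥0∞) = (∫⁻ x, g x ^ p ∂μ) ^ (1 / p) :=
    ⟨_, ENNReal.coe_toNNReal (ENNReal.rpow_ne_top_of_nonneg (by positivity) htop)⟩
  have hr_pos : 0 < r := by
    rw [← ENNReal.coe_pos, hr]
    exact ENNReal.rpow_pos (pos_iff_ne_zero.2 hzero) htop
  have hsuperlevel : ∫⁻ x in {x | r < g x}, g x ∂μ ≤ r := by
    have hpow_zero : (r : ℝ≥0∞) ^ (p - 1) ≠ 0 := by simp [hr_pos.ne']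
    have hpow_top : (r : ℝ≥0∞) ^ (p - 1) ≠ ⊤ :=
      ENNReal.rpow_ne_top_of_nonneg (sub_nonneg.2 hp) ENNReal.coe_ne_top
    have hr_rpow : (r : ℝ≥0∞) ^ p = ∫⁻ x, g x ^ p ∂μ := by
      rw [hr, one_div, ENNReal.rpow_inv_rpow hp_pos.ne']
    rw [← ENNReal.mul_le_mul_iff_right hpow_zero hpow_top, rpow_sub_one_mul_self hp, hr_rpow]
    exact rpow_sub_one_mul_setLIntegral_lt_le hg hp r
  calc ∫⁻ x, g x ∂μ
      = ∫⁻ x in {x | g x ≤ r}, g x ∂μ + ∫⁻ x in {x | r < g x}, g x ∂μ := by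
        have hmeas : MeasurableSet {x | g x ≤ r} := measurableSet_le hg measurable_const
        simpa only [compl_ofPred, not_le] using (lintegral_add_compl g hmeas).symm
    _ ≤ C * r + r := add_le_add (hC r hr_pos) hsuperlevel
    _ = (C + 1) * (∫⁻ x, g x ^ p ∂μ) ^ (1 / p) := by rw [← hr]; ring

lemma lintegral_rpow_sub_le_of_sublevel_le {s : α → ℝ} (hs : Measurable s)
    (hpos : ∀ᵐ x ∂μ, 0 < s x) {γ h : ℝ} (hγ : 0 < γ) {C : ℝ≥0∞}
    (hC : ∀ r : ℝ, 0 < r →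
      ∫⁻ x in {x | s x ≤ r}, ENNReal.ofReal (s x ^ (γ - h)) ∂μ ≤ C * ENNReal.ofReal (r ^ γ))
    {p : ℝ} (hp : 1 ≤ p) :
    ∫⁻ x, ENNReal.ofReal (s x ^ (γ - h)) ∂μ ≤
      (C + 1) * (∫⁻ x, ENNReal.ofReal (s x ^ (p * γ - h)) ∂μ) ^ (1 / p) := by
  set w : α → ℝ≥0∞ := fun x => ENNReal.ofReal (s x ^ (-h))
  set g : α → ℝ≥0∞ := fun x => ENNReal.ofReal (s x ^ γ)
  have hw : Measurable w := (hs.pow_const _).ennreal_ofReal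
  have hg : Measurable g := (hs.pow_const _).ennreal_ofReal
  have hweight (q : ℝ) : ∀ᵐ x ∂μ, ENNReal.ofReal (s x ^ (q - h)) =
      w x * ENNReal.ofReal (s x ^ q) := by
    filter_upwards [hpos] with x hx
    rw [← ENNReal.ofReal_mul (by positivity), ← rpow_add hx, neg_add_eq_sub]
  have hg_rpow : ∀ᵐ x ∂μ, ENNReal.ofReal (s x ^ (p * γ - h)) = w x * g x ^ p := by
    filter_upwards [hpos, hweight (p * γ)] with x hx hx_weight
    rw [hx_weight, ENNReal.ofReal_rpow_of_pos (by positivity), ← rpow_mul hx.le, mul_comm p]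
  have hsublevel (r : ℝ≥0) (hr : 0 < r) :
      ∫⁻ x in {x | g x ≤ r}, g x ∂(μ.withDensity w) ≤ C * r := by
    have hlevel : {x | g x ≤ r} =ᵐ[μ] {x | s x ≤ (r : ℝ) ^ γ⁻¹} := by
      filter_upwards [hpos] with x hx
      refine propext ?_
      change ENNReal.ofReal (s x ^ γ) ≤ r ↔ s x ≤ (r : ℝ) ^ γ⁻¹
      rw [← ENNReal.ofReal_coe_nnreal, ENNReal.ofReal_le_ofReal_iff r.coe_nonneg,
        le_rpow_inv_iff_of_pos hx.le r.coe_nonneg hγ]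
    calc ∫⁻ x in {x | g x ≤ r}, g x ∂(μ.withDensity w)
        = ∫⁻ x in {x | g x ≤ r}, w x * g x ∂μ :=
          setLIntegral_withDensity_eq_setLIntegral_mul μ hw hg
            (measurableSet_le hg measurable_const)
      _ = ∫⁻ x in {x | s x ≤ (r : ℝ) ^ γ⁻¹}, ENNReal.ofReal (s x ^ (γ - h)) ∂μ := by
          rw [setLIntegral_congr hlevel, lintegral_congr_ae (ae_restrict_of_ae (hweight γ))]
      _ ≤ C * ENNReal.ofReal (((r : ℝ) ^ γ⁻¹) ^ γ) := hC _ (by positivity)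
      _ = C * r := by rw [rpow_inv_rpow r.coe_nonneg hγ.ne', ENNReal.ofReal_coe_nnreal]
  have hbound := lintegral_le_mul_lintegral_rpow_of_sublevel_le hg hsublevel hp
  rw [lintegral_withDensity_eq_lintegral_mul μ hw hg,
    lintegral_withDensity_eq_lintegral_mul μ hw (hg.pow_const p)] at hbound
  rwa [lintegral_congr_ae (hweight γ), lintegral_congr_ae hg_rpow]

end SublevelGrowth

section PowerIntegrals

lemma setLIntegral_rpow_mul_deriv_le_of_monotoneOn {S : Set ℝ} (hS : MeasurableSet S)
    {f f' : ℝ → ℝ} {γ r : ℝ} (hγ : 0 < γ) (hf : ∀ x ∈ S, HasDerivWithinAt f (f' x) S x)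
    (hmono : MonotoneOn f S) (hmaps : MapsTo f S (Ioc 0 r)) :
    ∫⁻ x in S, ENNReal.ofReal (f x ^ (γ - 1) * f' x) ≤ ENNReal.ofReal (r ^ γ / γ) := by
  have hderiv : ∀ x ∈ S, HasDerivWithinAt (fun y => f y ^ γ / γ) (f x ^ (γ - 1) * f' x) S x := by
    intro x hx
    refine (((hf x hx).rpow_const (Or.inl (hmaps hx).1.ne')).div_const γ).congr_deriv ?_
    field_simp
  have hmono_div : MonotoneOn (fun y => y ^ γ / γ) (Ici 0) := fun x hx y _ hxy => by
    have hx_nonneg : 0 ≤ x := hx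
    dsimp only
    gcongr
  have hmono_rpow : MonotoneOn (fun x => f x ^ γ / γ) S :=
    hmono_div.comp hmono fun x hx => (hmaps hx).1.le
  have himage : (fun x => f x ^ γ / γ) '' S ⊆ Icc 0 (r ^ γ / γ) := by
    rintro _ ⟨x, hx, rfl⟩
    have hfx := hmaps hx
    have hfx_pos := hfx.1
    exact ⟨by positivity, hmono_div hfx_pos.le (hfx_pos.le.trans hfx.2) hfx.2⟩
  calc ∫⁻ x in S, ENNReal.ofReal (f x ^ (γ - 1) * f' x)
      = volume ((fun x => f x ^ γ / γ) '' S) :=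
        lintegral_deriv_eq_volume_image_of_monotoneOn hS hderiv hmono_rpow
    _ ≤ volume (Icc 0 (r ^ γ / γ)) := measure_mono himage
    _ = ENNReal.ofReal (r ^ γ / γ) := by simp

lemma setLIntegral_Ioc_rpow_sub_one_le {γ : ℝ} (hγ : 0 < γ) (r : ℝ) :
    ∫⁻ t in Ioc 0 r, ENNReal.ofReal (t ^ (γ - 1)) ≤ ENNReal.ofReal (r ^ γ / γ) := by
  simpa using setLIntegral_rpow_mul_deriv_le_of_monotoneOn measurableSet_Ioc hγ
    (fun x _ => hasDerivWithinAt_id x _) monotoneOn_id (mapsTo_id (Ioc 0 r))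

lemma setLIntegral_sinh_rpow_le {γ : ℝ} (hγ : 0 < γ) (r : ℝ) :
    ∫⁻ t in {t | sinh t ≤ r} ∩ Ioi 0, ENNReal.ofReal (sinh t ^ γ) ≤
      ENNReal.ofReal (r ^ γ / γ) := by
  have hS : MeasurableSet ({t | sinh t ≤ r} ∩ Ioi 0) :=
    (measurableSet_le measurable_sinh measurable_const).inter measurableSet_Ioi
  calc ∫⁻ t in {t | sinh t ≤ r} ∩ Ioi 0, ENNReal.ofReal (sinh t ^ γ)
      ≤ ∫⁻ t in {t | sinh t ≤ r} ∩ Ioi 0, ENNReal.ofReal (sinh t ^ (γ - 1) * cosh t) := by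
        refine setLIntegral_mono' hS fun t ht => ENNReal.ofReal_le_ofReal ?_
        have hsinh : 0 < sinh t := sinh_pos_iff.2 ht.2
        calc sinh t ^ γ = sinh t ^ (γ - 1) * sinh t := by
              rw [rpow_sub_one hsinh.ne', div_mul_cancel₀ _ hsinh.ne']
          _ ≤ sinh t ^ (γ - 1) * cosh t := by gcongr; exact (sinh_lt_cosh t).le
    _ ≤ ENNReal.ofReal (r ^ γ / γ) :=
        setLIntegral_rpow_mul_deriv_le_of_monotoneOn hS hγ
          (fun t _ => (hasDerivAt_sinh t).hasDerivWithinAt) (sinh_strictMono.monotone.monotoneOn _)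
          fun t ht => ⟨sinh_pos_iff.2 ht.2, ht.1⟩

lemma rpow_le_max_rpow {a b x : ℝ} (ha : 0 < a) (hax : a ≤ x) (hxb : x ≤ b) (q : ℝ) :
    x ^ q ≤ max (a ^ q) (b ^ q) := by
  rcases le_total q 0 with hq | hq
  · exact le_max_of_le_left (rpow_le_rpow_of_nonpos ha hax hq)
  · exact le_max_of_le_right (rpow_le_rpow (ha.le.trans hax) hxb hq)

lemma sin_rpow_le_mul_rpow {t : ℝ} (ht_pos : 0 < t) (ht : t ≤ π / 2) (q : ℝ) :
    sin t ^ q ≤ max ((2 / π) ^ q) 1 * t ^ q := by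
  have hsin : 0 ≤ sin t := sin_nonneg_of_nonneg_of_le_pi ht_pos.le (by linarith [pi_pos])
  have hlower : 2 / π ≤ sin t / t := (le_div_iff₀ ht_pos).2 (mul_le_sin ht_pos.le ht)
  have hupper : sin t / t ≤ 1 := (div_le_one ht_pos).2 (sin_le ht_pos.le)
  have hratio := rpow_le_max_rpow (by positivity) hlower hupper q
  rwa [one_rpow, div_rpow hsin ht_pos.le, div_le_iff₀ (by positivity)] at hratio

lemma setLIntegral_sin_rpow_sub_one_le {γ : ℝ} (hγ : 0 < γ) (r : ℝ) :
    ∫⁻ t in {t | sin t ≤ r} ∩ Ioo 0 (π / 2), ENNReal.ofReal (sin t ^ (γ - 1)) ≤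
      ENNReal.ofReal (max ((2 / π) ^ (γ - 1)) 1 * ((π / 2 * r) ^ γ / γ)) := by
  set M := max ((2 / π) ^ (γ - 1)) 1
  have hM : 0 ≤ M := le_max_of_le_right zero_le_one
  have hS : MeasurableSet ({t | sin t ≤ r} ∩ Ioo 0 (π / 2)) :=
    (measurableSet_le measurable_sin measurable_const).inter measurableSet_Ioo
  have hsubset : {t | sin t ≤ r} ∩ Ioo 0 (π / 2) ⊆ Ioc 0 (π / 2 * r) := by
    rintro t ⟨htr, ht⟩
    refine ⟨ht.1, ?_⟩
    calc t = π / 2 * (2 / π * t) := by field_simp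
      _ ≤ π / 2 * r := by gcongr; exact (mul_le_sin ht.1.le ht.2.le).trans htr
  calc ∫⁻ t in {t | sin t ≤ r} ∩ Ioo 0 (π / 2), ENNReal.ofReal (sin t ^ (γ - 1))
      ≤ ∫⁻ t in {t | sin t ≤ r} ∩ Ioo 0 (π / 2),
          ENNReal.ofReal M * ENNReal.ofReal (t ^ (γ - 1)) := by
        refine setLIntegral_mono' hS fun t ht => ?_
        rw [← ENNReal.ofReal_mul hM]
        exact ENNReal.ofReal_le_ofReal (sin_rpow_le_mul_rpow ht.2.1 ht.2.2.le _)
    _ ≤ ∫⁻ t in Ioc 0 (π / 2 * r), ENNReal.ofReal M * ENNReal.ofReal (t ^ (γ - 1)) :=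
        lintegral_mono_set hsubset
    _ = ENNReal.ofReal M * ∫⁻ t in Ioc 0 (π / 2 * r), ENNReal.ofReal (t ^ (γ - 1)) :=
        lintegral_const_mul' _ _ ENNReal.ofReal_ne_top
    _ ≤ ENNReal.ofReal M * ENNReal.ofReal ((π / 2 * r) ^ γ / γ) := by
        gcongr
        exact setLIntegral_Ioc_rpow_sub_one_le hγ _
    _ = ENNReal.ofReal (M * ((π / 2 * r) ^ γ / γ)) := (ENNReal.ofReal_mul hM).symm

end PowerIntegrals

section CurvatureFunction

lemma measurable_sc (c : ℝ) : Measurable (sc c) := by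
  unfold sc
  split_ifs
  exacts [measurable_sinh, measurable_sin, measurable_id]

lemma measurableSet_Dc (c : ℝ) : MeasurableSet (Dc c) := by
  unfold Dc
  split_ifs
  exacts [measurableSet_Ioo, measurableSet_Ioi]

lemma sc_pos_of_mem_Dc {c t : ℝ} (ht : t ∈ Dc c) : 0 < sc c t := by
  unfold Dc at ht
  split_ifs at ht with hc
  · have hsin : 0 < sin t := sin_pos_of_pos_of_lt_pi ht.1 (by linarith [ht.2, pi_pos])
    norm_num [sc, hc, hsin]
  · have ht_pos : 0 < t := ht
    unfold sc
    split_ifs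
    exacts [sinh_pos_iff.2 ht_pos, ht_pos]

lemma exists_setLIntegral_sc_rpow_le {c : ℝ} (hc : c = -1 ∨ c = 0 ∨ c = 1) {γ : ℝ} (hγ : 0 < γ) :
    ∃ C : ℝ, 0 ≤ C ∧ ∀ r : ℝ, 0 < r →
      ∫⁻ t in {t | sc c t ≤ r} ∩ Dc c, ENNReal.ofReal (sc c t ^ (γ - Hv c)) ≤
        ENNReal.ofReal (C * r ^ γ) := by
  rcases hc with rfl | rfl | rfl
  · have hHv : Hv (-1) = 0 := by norm_num [Hv]
    have hDc : Dc (-1) = Ioi 0 := by norm_num [Dc]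
    refine ⟨γ⁻¹, by positivity, fun r _ => ?_⟩
    simpa [sc, hDc, hHv, div_eq_inv_mul] using setLIntegral_sinh_rpow_le hγ r
  · have hset (r : ℝ) : {t | t ≤ r} ∩ Ioi 0 = Ioc 0 r := by ext; simp [and_comm]
    refine ⟨γ⁻¹, by positivity, fun r _ => ?_⟩
    simpa [sc, Dc, Hv, hset, div_eq_inv_mul] using setLIntegral_Ioc_rpow_sub_one_le hγ r
  · have hsc : sc 1 = sin := by funext; norm_num [sc]
    refine ⟨max ((2 / π) ^ (γ - 1)) 1 * ((π / 2) ^ γ / γ), by positivity, fun r hr => ?_⟩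
    have hsin := setLIntegral_sin_rpow_sub_one_le hγ r
    rw [mul_rpow (by positivity) hr.le, mul_div_right_comm, ← mul_assoc] at hsin
    simpa only [hsc, Dc, Hv, if_pos, zero_le_one] using hsin

end CurvatureFunction

theorem sc_endpoint_lemma_general {c : ℝ} (hc : c = -1 ∨ c = 0 ∨ c = 1) {γ : ℝ} (hγ : 0 < γ) :
    ∃ K : ℝ, 0 < K ∧ ∀ p : ℝ, 1 ≤ p → ∀ μ : Measure ℝ, μ ≤ volume.restrict (Dc c) →
      ∫⁻ t, ENNReal.ofReal (sc c t ^ (γ - Hv c)) ∂μ ≤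
        ENNReal.ofReal K * (∫⁻ t, ENNReal.ofReal (sc c t ^ (p * γ - Hv c)) ∂μ) ^ (1 / p) := by
  obtain ⟨C, hC_nonneg, hC⟩ := exists_setLIntegral_sc_rpow_le hc hγ
  refine ⟨C + 1, by positivity, fun p hp μ hμ => ?_⟩
  have hpos : ∀ᵐ t ∂μ, 0 < sc c t :=
    (Measure.absolutelyContinuous_of_le hμ).ae_le
      ((ae_restrict_mem (measurableSet_Dc c)).mono fun _ => sc_pos_of_mem_Dc)
  have hsublevel (r : ℝ) (hr : 0 < r) :
      ∫⁻ t in {t | sc c t ≤ r}, ENNReal.ofReal (sc c t ^ (γ - Hv c)) ∂μ ≤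
        ENNReal.ofReal C * ENNReal.ofReal (r ^ γ) := by
    rw [← ENNReal.ofReal_mul hC_nonneg]
    refine (lintegral_mono' (Measure.restrict_mono_measure hμ _) le_rfl).trans ?_
    rw [Measure.restrict_restrict (measurableSet_le (measurable_sc c) measurable_const)]
    exact hC r hr
  rw [ENNReal.ofReal_add hC_nonneg zero_le_one, ENNReal.ofReal_one]
  exact lintegral_rpow_sub_le_of_sublevel_le (measurable_sc c) hpos hγ hsublevel hp

theorem sc_endpoint_lemma (c : ℝ) (hc : c = -1 ∨ c = 0 ∨ c = 1)
    (γ p : ℝ) (hγ : 0 < γ) (hp : 1 ≤ p) :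
    ∃ K : ℝ, 0 < K ∧
      ∀ E : Set ℝ, MeasurableSet E → E ⊆ Dc c → volume E < ⊤ →
        (∫⁻ t in E, ENNReal.ofReal ((sc c t) ^ (γ - Hv c))) ≤
        ENNReal.ofReal K *
          (∫⁻ t in E, ENNReal.ofReal ((sc c t) ^ (p * γ - Hv c))) ^ (1 / p) := by
  obtain ⟨K, hK, hbound⟩ := sc_endpoint_lemma_general hc hγ
  exact ⟨K, hK, fun E _ hE _ => hbound p hp _ (Measure.restrict_mono_set volume hE)⟩
end

section
/- Let γ > 0 and p ≥ 1. Then there exists a constant K > 0, depending only on p and γ, such that for every Lebesgue-measurable set E ⊆ (0, ∞) of finite Lebesgue measure, ∫_E s^{γ - 1} ds ≤ K · ( ∫_E s^{p·γ - 1} ds )^{1/p}. -/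
open MeasureTheory Real Set

open scoped ENNReal NNReal

/-!
Let `dμ = s ^ (γ - 1) ds` and `φ s = s ^ γ`, so that `s ^ (p * γ - 1) ds = φ ^ (p - 1) dμ` and the
claim bounds the total mass of `μ` by a moment of `φ`. Write `B` for that moment and cut at the
height `t = B ^ (1 / p)`. The substitution `u = s ^ γ` turns `μ` into `|γ|⁻¹ du`, so `{φ ≤ t}` has
mass at most `t / |γ|`; by Markov's inequality `{t < φ}` has mass at most `B / t ^ (p - 1) = t`.
-/

section MomentBound

variable {α : Type*} [MeasurableSpace α] {μ : Measure α} {φ : α → ℝ≥0∞}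

theorem measure_lt_le_of_lintegral_rpow_le {q : ℝ} (hq : 0 ≤ q) (hφ : AEMeasurable φ μ) {t : ℝ≥0}
    (ht : ∫⁻ x, φ x ^ q ∂μ ≤ (t : ℝ≥0∞) ^ (q + 1)) : μ {x | t < φ x} ≤ t := by
  obtain rfl | htpos := eq_zero_or_pos t
  · have hvanish : ∀ᵐ x ∂μ, φ x ^ q = 0 := by
      rw [ENNReal.coe_zero, ENNReal.zero_rpow_of_pos (by linarith), nonpos_iff_eq_zero,
        lintegral_eq_zero_iff' (hφ.pow_const q)] at ht
      exact ht
    refine (measure_mono_null (fun x hx hzero ↦ ?_) hvanish).le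
    rcases ENNReal.rpow_eq_zero_iff.mp hzero with ⟨hφx, -⟩ | ⟨-, hqneg⟩
    · exact (show 0 < φ x from hx).ne' hφx
    · exact hq.not_gt hqneg
  · have ht0 : (t : ℝ≥0∞) ≠ 0 := by exact_mod_cast htpos.ne'
    have hmarkov : (t : ℝ≥0∞) ^ q * μ {x | t < φ x} ≤ (t : ℝ≥0∞) ^ q * t := calc
      _ ≤ (t : ℝ≥0∞) ^ q * μ {x | (t : ℝ≥0∞) ^ q ≤ φ x ^ q} := by
        gcongr with x
        exact fun hx ↦ ENNReal.rpow_le_rpow hx.le hq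
      _ ≤ ∫⁻ x, φ x ^ q ∂μ := mul_meas_ge_le_lintegral₀ (hφ.pow_const q) _
      _ ≤ (t : ℝ≥0∞) ^ (q + 1) := ht
      _ = (t : ℝ≥0∞) ^ q * t := by
        rw [ENNReal.rpow_add q 1 ht0 ENNReal.coe_ne_top, ENNReal.rpow_one]
    exact (ENNReal.mul_le_mul_iff_right (by simp [ht0]) (by simp [hq])).mp hmarkov

theorem measure_univ_le_mul_lintegral_rpow {p : ℝ} (hp : 1 ≤ p) (hφ : AEMeasurable φ μ) {C : ℝ≥0∞}
    (hC : ∀ t : ℝ≥0, μ {x | φ x ≤ t} ≤ C * t) :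
    μ univ ≤ (C + 1) * (∫⁻ x, φ x ^ (p - 1) ∂μ) ^ (1 / p) := by
  have hp0 : 0 < p := by linarith
  obtain htop | hfin := eq_or_ne ((∫⁻ x, φ x ^ (p - 1) ∂μ) ^ (1 / p)) ⊤
  · rw [htop, ENNReal.mul_top (by simp)]
    exact le_top
  lift (∫⁻ x, φ x ^ (p - 1) ∂μ) ^ (1 / p) to ℝ≥0 using hfin with t ht
  have hmoment : ∫⁻ x, φ x ^ (p - 1) ∂μ ≤ (t : ℝ≥0∞) ^ (p - 1 + 1) := by
    rw [ht, ← ENNReal.rpow_mul, sub_add_cancel, one_div_mul_cancel hp0.ne', ENNReal.rpow_one]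
  calc μ univ ≤ μ {x | φ x ≤ t} + μ {x | t < φ x} :=
        (measure_mono fun x _ ↦ le_or_gt (φ x) t).trans (measure_union_le _ _)
    _ ≤ C * t + t :=
        add_le_add (hC t) (measure_lt_le_of_lintegral_rpow_le (sub_nonneg.mpr hp) hφ hmoment)
    _ = (C + 1) * t := by ring

end MomentBound

theorem setLIntegral_abs_deriv_le_of_mapsTo_Icc {f f' : ℝ → ℝ} {s : Set ℝ} {a b : ℝ}
    (hs : MeasurableSet s) (hf' : ∀ x ∈ s, HasDerivWithinAt f (f' x) s x) (hf : InjOn f s)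
    (hmaps : MapsTo f s (Icc a b)) :
    ∫⁻ x in s, ENNReal.ofReal |f' x| ≤ ENNReal.ofReal (b - a) := calc
  ∫⁻ x in s, ENNReal.ofReal |f' x| = volume (f '' s) := by
    simpa using (lintegral_image_eq_lintegral_abs_deriv_mul hs hf' hf fun _ ↦ 1).symm
  _ ≤ volume (Icc a b) := measure_mono hmaps.image_subset
  _ = ENNReal.ofReal (b - a) := Real.volume_Icc

theorem setLIntegral_rpow_sub_one_sublevel_le {γ : ℝ} (hγ : γ ≠ 0) (t : ℝ) :
    ∫⁻ s in {s | s ^ γ ≤ t} ∩ Ioi 0, ENNReal.ofReal (s ^ (γ - 1)) ≤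
      ENNReal.ofReal (1 / |γ|) * ENNReal.ofReal t := by
  set S := {s : ℝ | s ^ γ ≤ t} ∩ Ioi 0
  have hpos : ∀ s ∈ S, 0 < s := fun s hs ↦ hs.2
  have hS : MeasurableSet S :=
    (measurableSet_le (by fun_prop) (by fun_prop)).inter measurableSet_Ioi
  have hderiv : ∀ s ∈ S, HasDerivWithinAt (· ^ γ) (γ * s ^ (γ - 1)) S s :=
    fun s hs ↦ (hasDerivAt_rpow_const (Or.inl (hpos s hs).ne')).hasDerivWithinAt
  have hinj : InjOn (· ^ γ) S := (rpow_left_injOn hγ).mono fun s hs ↦ (hpos s hs).le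
  have hmaps : MapsTo (· ^ γ) S (Icc 0 t) := fun s hs ↦ ⟨rpow_nonneg (hpos s hs).le γ, hs.1⟩
  calc ∫⁻ s in S, ENNReal.ofReal (s ^ (γ - 1))
      = ∫⁻ s in S, ENNReal.ofReal (1 / |γ|) * ENNReal.ofReal |γ * s ^ (γ - 1)| := by
        refine setLIntegral_congr_fun hS fun s hs ↦ ?_
        have hpow : 0 ≤ s ^ (γ - 1) := rpow_nonneg (hpos s hs).le _
        rw [← ENNReal.ofReal_mul (by positivity), abs_mul, abs_of_nonneg hpow, ← mul_assoc,
          one_div_mul_cancel (abs_ne_zero.mpr hγ), one_mul]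
    _ = ENNReal.ofReal (1 / |γ|) * ∫⁻ s in S, ENNReal.ofReal |γ * s ^ (γ - 1)| :=
        lintegral_const_mul _ (by fun_prop)
    _ ≤ ENNReal.ofReal (1 / |γ|) * ENNReal.ofReal t := by
        gcongr
        simpa only [sub_zero] using setLIntegral_abs_deriv_le_of_mapsTo_Icc hS hderiv hinj hmaps

theorem withDensity_rpow_sub_one_sublevel_le {γ : ℝ} (hγ : γ ≠ 0) {ν : Measure ℝ}
    (hν : ν ≤ volume.restrict (Ioi 0)) (t : ℝ) :
    ν.withDensity (fun s ↦ ENNReal.ofReal (s ^ (γ - 1))) {s | s ^ γ ≤ t} ≤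
      ENNReal.ofReal (1 / |γ|) * ENNReal.ofReal t := by
  have hmeas : MeasurableSet {s : ℝ | s ^ γ ≤ t} := measurableSet_le (by fun_prop) (by fun_prop)
  rw [withDensity_apply _ hmeas]
  calc ∫⁻ s in {s | s ^ γ ≤ t}, ENNReal.ofReal (s ^ (γ - 1)) ∂ν
      ≤ ∫⁻ s in {s | s ^ γ ≤ t} ∩ Ioi 0, ENNReal.ofReal (s ^ (γ - 1)) := by
        rw [← Measure.restrict_restrict hmeas]
        exact lintegral_mono' (Measure.restrict_mono_measure hν _) le_rfl
    _ ≤ ENNReal.ofReal (1 / |γ|) * ENNReal.ofReal t := setLIntegral_rpow_sub_one_sublevel_le hγ t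

theorem ofReal_rpow_sub_one_mul_ofReal_rpow {s : ℝ} (hs : 0 < s) (γ p : ℝ) :
    ENNReal.ofReal (s ^ (γ - 1)) * ENNReal.ofReal (s ^ γ) ^ (p - 1) =
      ENNReal.ofReal (s ^ (p * γ - 1)) := by
  rw [ENNReal.ofReal_rpow_of_pos (by positivity), ← ENNReal.ofReal_mul (by positivity),
    ← rpow_mul hs.le, ← rpow_add hs]
  ring_nf

theorem power_endpoint_lemma_general {γ p : ℝ} (hγ : γ ≠ 0) (hp : 1 ≤ p) {ν : Measure ℝ}
    (hν : ν ≤ volume.restrict (Ioi 0)) :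
    ∫⁻ s, ENNReal.ofReal (s ^ (γ - 1)) ∂ν ≤
      ENNReal.ofReal (1 / |γ| + 1) * (∫⁻ s, ENNReal.ofReal (s ^ (p * γ - 1)) ∂ν) ^ (1 / p) := by
  have hweight : Measurable fun s : ℝ ↦ ENNReal.ofReal (s ^ (γ - 1)) := by fun_prop
  have hφ : Measurable fun s : ℝ ↦ ENNReal.ofReal (s ^ γ) := by fun_prop
  set μ := ν.withDensity fun s ↦ ENNReal.ofReal (s ^ (γ - 1)) with hμ
  have hmass : μ univ = ∫⁻ s, ENNReal.ofReal (s ^ (γ - 1)) ∂ν := by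
    rw [hμ, withDensity_apply _ .univ, Measure.restrict_univ]
  have hmoment : ∫⁻ s, ENNReal.ofReal (s ^ γ) ^ (p - 1) ∂μ =
      ∫⁻ s, ENNReal.ofReal (s ^ (p * γ - 1)) ∂ν := by
    rw [hμ, lintegral_withDensity_eq_lintegral_mul _ hweight (hφ.pow_const _)]
    refine lintegral_congr_ae ?_
    filter_upwards [ae_mono hν (ae_restrict_mem measurableSet_Ioi)] with s hs
    exact ofReal_rpow_sub_one_mul_ofReal_rpow hs γ p
  rw [← hmass, ← hmoment, ENNReal.ofReal_add (by positivity) zero_le_one, ENNReal.ofReal_one]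
  exact measure_univ_le_mul_lintegral_rpow hp hφ.aemeasurable fun t ↦ by
    simpa only [ENNReal.ofReal_le_coe, ENNReal.ofReal_coe_nnreal] using
      withDensity_rpow_sub_one_sublevel_le hγ hν t

theorem power_endpoint_lemma (γ p : ℝ) (hγ : 0 < γ) (hp : 1 ≤ p) :
    ∃ K : ℝ, 0 < K ∧
      ∀ E : Set ℝ, MeasurableSet E → E ⊆ Set.Ioi 0 → volume E < ⊤ →
        (∫⁻ s in E, ENNReal.ofReal (s ^ (γ - 1))) ≤
        ENNReal.ofReal K * (∫⁻ s in E, ENNReal.ofReal (s ^ (p * γ - 1))) ^ (1 / p) :=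
  ⟨1 / |γ| + 1, by positivity, fun _ _ hE _ ↦
    power_endpoint_lemma_general hγ.ne' hp (Measure.restrict_mono_set volume hE)⟩
end

section
/- Let n ≥ 3 and 2 ≤ k ≤ n - 1. There exists a constant C > 0, depending only on n and k, such that for every radial Lebesgue-measurable set E ⊆ ℝⁿ of finite Lebesgue measure and every k-dimensional affine subspace ξ ⊆ ℝⁿ, the k-dimensional Hausdorff measure of E ∩ ξ satisfies μH^k(E ∩ ξ) ≤ C · (λ(E))^{k/n}, where λ denotes Lebesgue measure on ℝⁿ. -/
open MeasureTheory Real Set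

/-!
Restricted to a `k`-plane at distance `d` from the origin, a radial set is again radial: in the
variable `r`, the distance to the foot of the perpendicular, it is `{r | √(d² + r²) ∈ A}`. For
`k ≥ 2` the substitution `s = √(d² + r²)` has `r ^ (k - 1) dr ≤ s ^ (k - 1) ds`, because
`r dr = s ds` and `r ^ (k - 2) ≤ s ^ (k - 2)`; so moving the plane to the origin can only enlarge
the section. Among the radial sets of given volume the largest central section is that of the ball,
by the bathtub principle: the density `r ^ (k - 1)` relative to `r ^ (n - 1)` is decreasing.
-/

section

open Measure Module Metric
open scoped ENNReal

section Bathtub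

variable {α : Type*} [MeasurableSpace α] {μ ν : Measure α} {s t : Set α}

lemma measure_sdiff_le_measure_sdiff_of_le (hs : MeasurableSet s) (ht : MeasurableSet t)
    (hμ : μ s ≤ μ t) (hfin : μ s ≠ ∞) : μ (s \ t) ≤ μ (t \ s) := by
  rw [← measure_inter_add_sdiff s ht, ← measure_inter_add_sdiff t hs, inter_comm t s] at hμ
  exact (ENNReal.add_le_add_iff_left (measure_ne_top_of_subset inter_subset_left hfin)).1 hμ

lemma measure_le_of_measure_sdiff_le_mul (hs : MeasurableSet s) (ht : MeasurableSet t)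
    (hμ : μ s ≤ μ t) (hfin : μ s ≠ ∞) {c : ℝ≥0∞} (hst : ν (s \ t) ≤ c * μ (s \ t))
    (hts : c * μ (t \ s) ≤ ν (t \ s)) : ν s ≤ ν t :=
  calc ν s = ν (s ∩ t) + ν (s \ t) := (measure_inter_add_sdiff s ht).symm
    _ ≤ ν (s ∩ t) + c * μ (s \ t) := by gcongr
    _ ≤ ν (s ∩ t) + c * μ (t \ s) := by
      gcongr _ + c * ?_
      exact measure_sdiff_le_measure_sdiff_of_le hs ht hμ hfin
    _ ≤ ν (t ∩ s) + ν (t \ s) := by rw [inter_comm]; gcongr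
    _ = ν t := measure_inter_add_sdiff t hs

end Bathtub

section RadialMeasure

/-- The measure on `ℝ` with density `r ^ m` on `(0, ∞)`: up to a constant, the distribution of `‖x‖`
when `x` ranges over a space of dimension `m + 1` with Haar measure. It is Mathlib's `volumeIoiPow`,
moved from the subtype `Ioi 0` to `ℝ`. -/
noncomputable def radialMeasure (m : ℕ) : Measure ℝ :=
  (volumeIoiPow m).map (↑)

lemma radialMeasure_eq_volumeIoiPow (m : ℕ) (A : Set ℝ) :
    radialMeasure m A = volumeIoiPow m ((↑) ⁻¹' A) :=
  (MeasurableEmbedding.subtype_coe measurableSet_Ioi).map_apply _ _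

lemma radialMeasure_apply (m : ℕ) {A : Set ℝ} (hA : MeasurableSet A) :
    radialMeasure m A = ∫⁻ r in A ∩ Ioi 0, ENNReal.ofReal (r ^ m) := by
  rw [radialMeasure_eq_volumeIoiPow, volumeIoiPow,
    withDensity_apply _ (measurable_subtype_coe hA),
    setLIntegral_subtype measurableSet_Ioi _ fun r : ℝ ↦ ENNReal.ofReal (r ^ m),
    Subtype.image_preimage_coe, inter_comm]

lemma radialMeasure_Iio_lt_top (m : ℕ) (R : ℝ) : radialMeasure m (Iio R) < ∞ :=
  calc radialMeasure m (Iio R) = ∫⁻ r in Iio R ∩ Ioi 0, ENNReal.ofReal (r ^ m) :=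
        radialMeasure_apply m measurableSet_Iio
    _ ≤ ∫⁻ _ in Iio R ∩ Ioi 0, ENNReal.ofReal (R ^ m) := by
      refine setLIntegral_mono' (measurableSet_Iio.inter measurableSet_Ioi) fun r hr ↦ ?_
      gcongr
      exacts [hr.2.le, hr.1.le]
    _ = ENNReal.ofReal (R ^ m) * volume (Iio R ∩ Ioi 0) := setLIntegral_const ..
    _ < ∞ := by
      rw [inter_comm, Ioi_inter_Iio, Real.volume_Ioo]
      exact ENNReal.mul_lt_top ENNReal.ofReal_lt_top ENNReal.ofReal_lt_top

lemma radialMeasure_le_inv_mul_of_subset_Ici {A : Set ℝ} (hA : MeasurableSet A) {R : ℝ}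
    (hR : 0 ≤ R) (hAR : A ⊆ Ici R) (m j : ℕ) :
    radialMeasure m A ≤ (ENNReal.ofReal (R ^ j))⁻¹ * radialMeasure (m + j) A := by
  rw [radialMeasure_apply m hA, radialMeasure_apply (m + j) hA,
    ← lintegral_const_mul _ (by fun_prop)]
  refine setLIntegral_mono' (hA.inter measurableSet_Ioi) fun r ⟨hrA, (hr : 0 < r)⟩ ↦ ?_
  have hRr : R ≤ r := hAR hrA
  have hpos : ENNReal.ofReal (r ^ (m + j)) ≠ 0 := by simpa using pow_pos hr _
  rw [mul_comm, ← div_eq_mul_inv,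
    ENNReal.le_div_iff_mul_le (.inr hpos) (.inl ENNReal.ofReal_ne_top),
    ← ENNReal.ofReal_mul (by positivity), pow_add]
  gcongr

lemma inv_mul_radialMeasure_le_of_subset_Iio {A : Set ℝ} (hA : MeasurableSet A) {R : ℝ}
    (hAR : A ⊆ Iio R) (m j : ℕ) :
    (ENNReal.ofReal (R ^ j))⁻¹ * radialMeasure (m + j) A ≤ radialMeasure m A := by
  rw [radialMeasure_apply m hA, radialMeasure_apply (m + j) hA,
    ← lintegral_const_mul _ (by fun_prop)]
  refine setLIntegral_mono' (hA.inter measurableSet_Ioi) fun r ⟨hrA, (hr : 0 < r)⟩ ↦ ?_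
  have hrR : r ≤ R := (hAR hrA).le
  rw [mul_comm, ← div_eq_mul_inv]
  refine ENNReal.div_le_of_le_mul ?_
  rw [← ENNReal.ofReal_mul (by positivity), pow_add]
  gcongr

lemma radialMeasure_le_radialMeasure_Iio {A : Set ℝ} (hA : MeasurableSet A) {R : ℝ} (hR : 0 ≤ R)
    {m n : ℕ} (hmn : m ≤ n) (h : radialMeasure n A ≤ radialMeasure n (Iio R)) :
    radialMeasure m A ≤ radialMeasure m (Iio R) := by
  obtain ⟨j, rfl⟩ := Nat.exists_eq_add_of_le hmn
  refine measure_le_of_measure_sdiff_le_mul hA measurableSet_Iio h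
    (h.trans_lt (radialMeasure_Iio_lt_top _ R)).ne
    (radialMeasure_le_inv_mul_of_subset_Ici (hA.diff measurableSet_Iio) hR ?_ m j)
    (inv_mul_radialMeasure_le_of_subset_Iio (measurableSet_Iio.diff hA) sdiff_subset m j)
  exact fun r hr ↦ not_lt.1 (show ¬r < R from hr.2)

lemma hasDerivAt_sqrt_sq_add_sq (d : ℝ) {r : ℝ} (hr : 0 < r) :
    HasDerivAt (fun r ↦ √(d ^ 2 + r ^ 2)) (r / √(d ^ 2 + r ^ 2)) r := by
  have h := ((hasDerivAt_pow 2 r).const_add (d ^ 2)).sqrt (by positivity)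
  refine h.congr_deriv ?_
  field_simp
  simp

lemma injOn_sqrt_sq_add_sq (d : ℝ) : InjOn (fun r ↦ √(d ^ 2 + r ^ 2)) (Ioi 0) := by
  intro r (hr : 0 < r) s (hs : 0 < s) h
  have hsq : d ^ 2 + r ^ 2 = d ^ 2 + s ^ 2 := (Real.sqrt_inj (by positivity) (by positivity)).1 h
  exact (pow_left_inj₀ hr.le hs.le two_ne_zero).1 (add_left_cancel hsq)

lemma pow_le_div_sqrt_mul_sqrt_pow {m : ℕ} (hm : m ≠ 0) (d : ℝ) {r : ℝ} (hr : 0 < r) :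
    r ^ m ≤ r / √(d ^ 2 + r ^ 2) * √(d ^ 2 + r ^ 2) ^ m := by
  obtain ⟨j, rfl⟩ := Nat.exists_eq_succ_of_ne_zero hm
  have hle : r ≤ √(d ^ 2 + r ^ 2) := Real.le_sqrt_of_sq_le (le_add_of_nonneg_left (sq_nonneg d))
  calc r ^ (j + 1) = r * r ^ j := pow_succ' r j
    _ ≤ r * √(d ^ 2 + r ^ 2) ^ j := by gcongr
    _ = r / √(d ^ 2 + r ^ 2) * √(d ^ 2 + r ^ 2) ^ (j + 1) := by
      have : √(d ^ 2 + r ^ 2) ≠ 0 := (hr.trans_le hle).ne'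
      rw [pow_succ' _ j, ← mul_assoc, div_mul_cancel₀ r this]

lemma radialMeasure_preimage_sqrt_sq_add_sq_le {m : ℕ} (hm : m ≠ 0) (d : ℝ) {A : Set ℝ}
    (hA : MeasurableSet A) :
    radialMeasure m ((fun r ↦ √(d ^ 2 + r ^ 2)) ⁻¹' A) ≤ radialMeasure m A := by
  set φ : ℝ → ℝ := fun r ↦ √(d ^ 2 + r ^ 2)
  have hφA : MeasurableSet (φ ⁻¹' A) := (by fun_prop : Measurable φ) hA
  have hs : MeasurableSet (φ ⁻¹' A ∩ Ioi 0) := hφA.inter measurableSet_Ioi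
  have himage : φ '' (φ ⁻¹' A ∩ Ioi 0) ⊆ A ∩ Ioi 0 := by
    rintro _ ⟨r, ⟨hrA, (hr : 0 < r)⟩, rfl⟩
    exact ⟨hrA, Real.sqrt_pos.2 (by positivity)⟩
  calc radialMeasure m (φ ⁻¹' A)
      = ∫⁻ r in φ ⁻¹' A ∩ Ioi 0, ENNReal.ofReal (r ^ m) := radialMeasure_apply m hφA
    _ ≤ ∫⁻ r in φ ⁻¹' A ∩ Ioi 0, ENNReal.ofReal |r / φ r| * ENNReal.ofReal (φ r ^ m) := by
      refine setLIntegral_mono' hs fun r ⟨_, (hr : 0 < r)⟩ ↦ ?_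
      rw [← ENNReal.ofReal_mul (abs_nonneg _), abs_of_nonneg (by positivity)]
      exact ENNReal.ofReal_le_ofReal (pow_le_div_sqrt_mul_sqrt_pow hm d hr)
    _ = ∫⁻ s in φ '' (φ ⁻¹' A ∩ Ioi 0), ENNReal.ofReal (s ^ m) :=
      (lintegral_image_eq_lintegral_abs_deriv_mul hs
        (fun r hr ↦ (hasDerivAt_sqrt_sq_add_sq d hr.2).hasDerivWithinAt)
        ((injOn_sqrt_sq_add_sq d).mono inter_subset_right) fun s ↦ ENNReal.ofReal (s ^ m)).symm
    _ ≤ ∫⁻ s in A ∩ Ioi 0, ENNReal.ofReal (s ^ m) := lintegral_mono_set himage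
    _ = radialMeasure m A := (radialMeasure_apply m hA).symm

end RadialMeasure

section BallRatio

lemma measureReal_ball_pos {X : Type*} [PseudoMetricSpace X] [ProperSpace X] [MeasurableSpace X]
    (μ : Measure X) [μ.IsOpenPosMeasure] [IsFiniteMeasureOnCompacts μ] (x : X) {R : ℝ}
    (hR : 0 < R) : 0 < μ.real (ball x R) :=
  ENNReal.toReal_pos (measure_ball_pos μ x hR).ne' measure_ball_lt_top.ne

variable {F G : Type*}
  [NormedAddCommGroup G] [NormedSpace ℝ G] [MeasurableSpace G]
  [NormedAddCommGroup F] [NormedSpace ℝ F] [MeasurableSpace F]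

/-- The constant `c` with `ν (ball 0 R) = c * μ (ball 0 R) ^ (dim G / dim F)` for all `R ≥ 0`. By
comparison with balls it is the optimal constant for sections of radial sets. -/
noncomputable def ballRatio (ν : Measure G) (μ : Measure F) : ℝ :=
  ν.real (ball 0 1) / μ.real (ball 0 1) ^ ((finrank ℝ G : ℝ) / finrank ℝ F)

lemma ballRatio_pos [ProperSpace G] (ν : Measure G) [ν.IsOpenPosMeasure]
    [IsFiniteMeasureOnCompacts ν] [ProperSpace F] (μ : Measure F) [μ.IsOpenPosMeasure]
    [IsFiniteMeasureOnCompacts μ] : 0 < ballRatio ν μ :=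
  div_pos (measureReal_ball_pos ν 0 one_pos) (rpow_pos_of_pos (measureReal_ball_pos μ 0 one_pos) _)

lemma ballRatio_hausdorffMeasure_congr {H : Type*} [NormedAddCommGroup H] [NormedSpace ℝ H]
    [MeasurableSpace H] [BorelSpace G] [BorelSpace H] (e : G ≃ₗᵢ[ℝ] H) (s : ℝ) (μ : Measure F) :
    ballRatio (μH[s] : Measure G) μ = ballRatio (μH[s] : Measure H) μ := by
  have hball : μH[s] (ball (0 : G) 1) = μH[s] (ball (0 : H) 1) := by
    rw [← e.isometry.hausdorffMeasure_image (.inr e.surjective), e.image_ball, map_zero]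
  simp only [ballRatio, Measure.real, hball, e.toLinearEquiv.finrank_eq]

end BallRatio

section RadialSet

lemma setOf_norm_mem_Iio {E : Type*} [SeminormedAddCommGroup E] (R : ℝ) :
    {x : E | ‖x‖ ∈ Iio R} = ball 0 R := by
  ext x
  simp

variable {F G : Type*}
  [NormedAddCommGroup G] [NormedSpace ℝ G] [FiniteDimensional ℝ G]
  [MeasurableSpace G] [BorelSpace G] (ν : Measure G) [ν.IsAddHaarMeasure]
  [NormedAddCommGroup F] [NormedSpace ℝ F] [FiniteDimensional ℝ F]
  [MeasurableSpace F] [BorelSpace F] (μ : Measure F) [μ.IsAddHaarMeasure]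

lemma measure_norm_mem [Nontrivial F] (A : Set ℝ) :
    μ {x : F | ‖x‖ ∈ A} = μ.toSphere univ * radialMeasure (finrank ℝ F - 1) A := by
  have hpreimage : homeomorphUnitSphereProd F ⁻¹' (univ ×ˢ ((↑) ⁻¹' A)) =
      {x : ({0}ᶜ : Set F) | ‖(x : F)‖ ∈ A} := by
    ext x; simp
  have himage : (↑) '' {x : ({0}ᶜ : Set F) | ‖(x : F)‖ ∈ A} = {x : F | ‖x‖ ∈ A} \ {0} := by
    ext x; simp [and_comm]
  rw [radialMeasure_eq_volumeIoiPow, ← prod_prod,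
    ← μ.measurePreserving_homeomorphUnitSphereProd.measure_preimage_emb
      (homeomorphUnitSphereProd F).measurableEmbedding,
    hpreimage, comap_subtype_coe_apply (measurableSet_singleton _).compl, himage,
    measure_sdiff_null (measure_singleton 0)]

lemma exists_measurableSet_superset_measure_norm_mem_eq [Nontrivial F] (A : Set ℝ) :
    ∃ B, A ⊆ B ∧ MeasurableSet B ∧ μ {x : F | ‖x‖ ∈ B} = μ {x : F | ‖x‖ ∈ A} := by
  refine ⟨toMeasurable (radialMeasure (finrank ℝ F - 1)) A, subset_toMeasurable _ _,
    measurableSet_toMeasurable _ _, ?_⟩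
  rw [measure_norm_mem, measure_norm_mem, measure_toMeasurable]

lemma measure_sqrt_sq_add_norm_sq_mem_le (hG : 2 ≤ finrank ℝ G) (d : ℝ) {A : Set ℝ}
    (hA : MeasurableSet A) : ν {y : G | √(d ^ 2 + ‖y‖ ^ 2) ∈ A} ≤ ν {y : G | ‖y‖ ∈ A} := by
  have : Nontrivial G := nontrivial_of_finrank_pos (R := ℝ) (by lia)
  calc ν {y : G | ‖y‖ ∈ (fun r ↦ √(d ^ 2 + r ^ 2)) ⁻¹' A}
      = ν.toSphere univ * radialMeasure (finrank ℝ G - 1) ((fun r ↦ √(d ^ 2 + r ^ 2)) ⁻¹' A) :=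
        measure_norm_mem ν _
    _ ≤ ν.toSphere univ * radialMeasure (finrank ℝ G - 1) A := by
      have hdim : finrank ℝ G - 1 ≠ 0 := by lia
      gcongr _ * ?_
      exact radialMeasure_preimage_sqrt_sq_add_sq_le hdim d hA
    _ = ν {y : G | ‖y‖ ∈ A} := (measure_norm_mem ν A).symm

variable {μ} in
lemma measure_norm_mem_le_measure_ball [Nontrivial G] (hGF : finrank ℝ G ≤ finrank ℝ F)
    {A : Set ℝ} (hA : MeasurableSet A) {R : ℝ} (hR : 0 ≤ R)
    (h : μ {x : F | ‖x‖ ∈ A} ≤ μ (ball 0 R)) : ν {y : G | ‖y‖ ∈ A} ≤ ν (ball 0 R) := by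
  have : Nontrivial F := nontrivial_of_finrank_pos (R := ℝ) (finrank_pos.trans_le hGF)
  have hsphere : μ.toSphere univ ≠ 0 := measure_univ_ne_zero.2 (toSphere_ne_zero μ)
  rw [← setOf_norm_mem_Iio, measure_norm_mem, measure_norm_mem,
    ENNReal.mul_le_mul_iff_right hsphere (measure_ne_top _ _)] at h
  rw [← setOf_norm_mem_Iio, measure_norm_mem, measure_norm_mem]
  gcongr _ * ?_
  exact radialMeasure_le_radialMeasure_Iio hA hR (Nat.sub_le_sub_right hGF 1) h

lemma exists_measure_ball_eq [Nontrivial F] {M : ℝ≥0∞} (hM : M ≠ ∞) :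
    ∃ R : ℝ, 0 ≤ R ∧ μ (ball 0 R) = M := by
  have hball : μ (ball (0 : F) 1) ≠ 0 := (measure_ball_pos μ 0 one_pos).ne'
  have hq : M / μ (ball (0 : F) 1) ≠ ∞ := ENNReal.div_ne_top hM hball
  refine ⟨(M / μ (ball (0 : F) 1)).toReal ^ (finrank ℝ F : ℝ)⁻¹, by positivity, ?_⟩
  rw [addHaar_ball μ 0 (by positivity), Real.rpow_inv_natCast_pow ENNReal.toReal_nonneg
    finrank_pos.ne', ENNReal.ofReal_toReal hq, ENNReal.div_mul_cancel hball measure_ball_lt_top.ne]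

lemma measure_ball_eq_ballRatio_mul [Nontrivial F] [Nontrivial G] {R : ℝ} (hR : 0 ≤ R) :
    ν (ball 0 R) = ENNReal.ofReal (ballRatio ν μ) *
      μ (ball 0 R) ^ ((finrank ℝ G : ℝ) / finrank ℝ F) := by
  have hμ : 0 < μ.real (ball 0 1) := measureReal_ball_pos μ 0 one_pos
  have hF : (finrank ℝ F : ℝ) ≠ 0 := by exact_mod_cast finrank_pos.ne'
  have hscale : (R ^ finrank ℝ F) ^ ((finrank ℝ G : ℝ) / finrank ℝ F) = R ^ finrank ℝ G := by
    rw [← rpow_natCast_mul hR, mul_div_cancel₀ _ hF, rpow_natCast]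
  rw [addHaar_ball ν 0 hR, addHaar_ball μ 0 hR, ← ofReal_measureReal (μ := ν),
    ← ofReal_measureReal (μ := μ), ← ENNReal.ofReal_mul (by positivity),
    ← ENNReal.ofReal_mul (by positivity),
    ENNReal.ofReal_rpow_of_nonneg (by positivity) (by positivity),
    ← ENNReal.ofReal_mul (ballRatio_pos ν μ).le, Real.mul_rpow (by positivity) hμ.le, hscale,
    ballRatio]
  congr 1
  field_simp

theorem measure_sqrt_sq_add_norm_sq_mem_le_ballRatio_mul (hG : 2 ≤ finrank ℝ G)
    (hGF : finrank ℝ G ≤ finrank ℝ F) (d : ℝ) (A : Set ℝ) :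
    ν {y : G | √(d ^ 2 + ‖y‖ ^ 2) ∈ A} ≤ ENNReal.ofReal (ballRatio ν μ) *
      μ {x : F | ‖x‖ ∈ A} ^ ((finrank ℝ G : ℝ) / finrank ℝ F) := by
  have hF : 0 < finrank ℝ F := by lia
  have : Nontrivial F := nontrivial_of_finrank_pos hF
  have : Nontrivial G := nontrivial_of_finrank_pos (R := ℝ) (by lia)
  obtain ⟨B, hAB, hB, hμB⟩ := exists_measurableSet_superset_measure_norm_mem_eq μ A
  by_cases hfin : μ {x : F | ‖x‖ ∈ A} = ∞
  · rw [hfin, ENNReal.top_rpow_of_pos (by positivity),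
      ENNReal.mul_top (ENNReal.ofReal_pos.2 (ballRatio_pos ν μ)).ne']
    exact le_top
  obtain ⟨R, hR, hμR⟩ := exists_measure_ball_eq μ hfin
  calc ν {y : G | √(d ^ 2 + ‖y‖ ^ 2) ∈ A}
      ≤ ν {y : G | √(d ^ 2 + ‖y‖ ^ 2) ∈ B} := measure_mono fun _ hy ↦ hAB hy
    _ ≤ ν {y : G | ‖y‖ ∈ B} := measure_sqrt_sq_add_norm_sq_mem_le ν hG d hB
    _ ≤ ν (ball 0 R) := measure_norm_mem_le_measure_ball ν hGF hB hR (hμB.trans hμR.symm).le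
    _ = _ := by rw [measure_ball_eq_ballRatio_mul ν μ hR, hμR]

end RadialSet

section PlaneSection

variable {F : Type*} [NormedAddCommGroup F] [InnerProductSpace ℝ F]
  [MeasurableSpace F] [BorelSpace F]

lemma hausdorffMeasure_norm_mem_inter_affineSubspace {ξ : AffineSubspace ℝ F} {p : F}
    (hp : p ∈ ξ) (hpo : p ∈ ξ.directionᗮ) {s : ℝ} (hs : 0 ≤ s) (A : Set ℝ) :
    μH[s] ({x : F | ‖x‖ ∈ A} ∩ ξ) = μH[s] {v : ξ.direction | √(‖p‖ ^ 2 + ‖v‖ ^ 2) ∈ A} := by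
  have hisom : Isometry fun v : ξ.direction ↦ p + v :=
    (isometry_add_left p).comp isometry_subtype_coe
  have hnorm (v : ξ.direction) : √(‖p‖ ^ 2 + ‖v‖ ^ 2) = ‖p + v‖ := by
    rw [Real.sqrt_eq_iff_mul_self_eq (by positivity) (norm_nonneg _),
      norm_add_sq_eq_norm_sq_add_norm_sq_of_inner_eq_zero p (v : F)
        (Submodule.inner_left_of_mem_orthogonal v.2 hpo), sq, sq, Submodule.coe_norm]
  rw [← hisom.hausdorffMeasure_image (.inl hs)]
  congr 1
  ext x
  simp only [hnorm]
  constructor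
  · rintro ⟨hx, hxξ⟩
    exact ⟨⟨x - p, AffineSubspace.vsub_mem_direction hxξ hp⟩, by simpa using hx, by simp⟩
  · rintro ⟨v, hv, rfl⟩
    exact ⟨hv, by simpa [add_comm] using AffineSubspace.vadd_mem_of_mem_direction v.2 hp⟩

theorem euclidean_kplane_endpoint_general [FiniteDimensional ℝ F] (μ : Measure F)
    [μ.IsAddHaarMeasure] {k : ℕ} (hk : 2 ≤ k) (A : Set ℝ) (ξ : AffineSubspace ℝ F)
    (hξ : finrank ℝ ξ.direction = k) :
    μH[(k : ℝ)] ({x : F | ‖x‖ ∈ A} ∩ ξ) ≤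
      ENNReal.ofReal (ballRatio (μH[(k : ℝ)] : Measure (EuclideanSpace ℝ (Fin k))) μ) *
        μ {x : F | ‖x‖ ∈ A} ^ ((k : ℝ) / finrank ℝ F) := by
  have : Nonempty ξ := by
    refine (AffineSubspace.nonempty_iff_ne_bot ξ).2 ?_ |>.to_subtype
    rintro rfl
    rw [AffineSubspace.direction_bot, finrank_bot] at hξ
    lia
  let e : ξ.direction ≃ₗᵢ[ℝ] EuclideanSpace ℝ (Fin k) :=
    ((stdOrthonormalBasis ℝ ξ.direction).reindex (finCongr hξ)).repr
  have hp : (EuclideanGeometry.orthogonalProjection ξ 0 : F) ∈ ξ.directionᗮ := by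
    simpa using EuclideanGeometry.orthogonalProjection_vsub_mem_direction_orthogonal ξ (0 : F)
  rw [hausdorffMeasure_norm_mem_inter_affineSubspace
      (EuclideanGeometry.orthogonalProjection_mem 0) hp k.cast_nonneg,
    ← ballRatio_hausdorffMeasure_congr e]
  subst hξ
  exact measure_sqrt_sq_add_norm_sq_mem_le_ballRatio_mul _ μ hk (Submodule.finrank_le _) _ A

end PlaneSection

end

theorem euclidean_kplane_endpoint (n k : ℕ) (hn : 3 ≤ n) (hk : 2 ≤ k) (hkn : k ≤ n - 1) :
    ∃ C : ℝ, 0 < C ∧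
      ∀ (E : Set (EuclideanSpace ℝ (Fin n))) (A : Set ℝ), MeasurableSet A →
        E = {x : EuclideanSpace ℝ (Fin n) | ‖x‖ ∈ A} → volume E < ⊤ →
        ∀ ξ : AffineSubspace ℝ (EuclideanSpace ℝ (Fin n)),
          (ξ : Set (EuclideanSpace ℝ (Fin n))).Nonempty →
          Module.finrank ℝ ξ.direction = k →
          μH[(k : ℝ)] (E ∩ (ξ : Set (EuclideanSpace ℝ (Fin n)))) ≤
            ENNReal.ofReal C * (volume E) ^ ((k : ℝ) / n) := by
  refine ⟨ballRatio (μH[(k : ℝ)] : Measure (EuclideanSpace ℝ (Fin k)))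
    (volume : Measure (EuclideanSpace ℝ (Fin n))), ballRatio_pos _ _, ?_⟩
  rintro _ A - rfl - ξ - hξ
  simpa using euclidean_kplane_endpoint_general volume hk A ξ hξ
end

section
/- Let n ≥ 3, 2 ≤ k ≤ n - 1, and let o = e_{n+1} ∈ Sⁿ, where Sⁿ is the unit sphere in ℝ^{n+1}. There exists a constant C > 0, depending only on n and k, such that for every radial measurable set E ⊆ Sⁿ and every (k+1)-dimensional linear subspace V ⊆ ℝ^{n+1}, ‖P_V(o)‖ · μH^k(E ∩ Sⁿ ∩ V) ≤ C · (μH^n(E))^{k/n}, where P_V denotes the orthogonal projection of ℝ^{n+1} onto V. -/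
open MeasureTheory Real Set RealInnerProductSpace

/-!
Inversion of radius `√2` about the pole `-u` exchanges the unit sphere with the hyperplane `uᗮ` and
takes height to the function `(1 - r²) / (1 + r²)` of the norm. It is bi-Lipschitz on the hemisphere
about `u`, so up to constants the `m`-dimensional measure of a radial subset of this hemisphere is
`∫ r ^ (m - 1)` over the corresponding set of radii.

A `(k + 1)`-dimensional subspace `V` sees the height over `o` as `c = ‖P_V o‖` times the height over
`P_V o / c`. In the height variable the density of the measure is antitone when `k ≥ 2`, so
contracting heights by `c` costs at most the factor `c⁻¹`, which is what the weight `‖P_V o‖`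
compensates. It remains to compare `∫ r ^ (k - 1)` with `∫ r ^ (n - 1)` over one set of radii, and
this is done by splitting the set at a radius chosen to balance the two pieces.
-/

open scoped ENNReal

section RadiusIntegrals

lemma addHaar_preimage_norm {E : Type*} [NormedAddCommGroup E] [NormedSpace ℝ E]
    [FiniteDimensional ℝ E] [Nontrivial E] [MeasurableSpace E] [BorelSpace E] (μ : Measure E)
    [μ.IsAddHaarMeasure] {R : Set ℝ} (hR : MeasurableSet R) :
    μ (norm ⁻¹' R) = μ.toSphere univ *
      ∫⁻ r in Ioi 0 ∩ R, ENNReal.ofReal (r ^ (Module.finrank ℝ E - 1)) := by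
  have hpre : homeomorphUnitSphereProd E ⁻¹' (univ ×ˢ (Subtype.val ⁻¹' R)) =
      Subtype.val ⁻¹' (norm ⁻¹' R) := by
    ext x
    simp
  have hmeas : MeasurableSet (Subtype.val ⁻¹' R : Set (Ioi (0 : ℝ))) := measurable_subtype_coe hR
  calc μ (norm ⁻¹' R)
      = μ.comap (Subtype.val : ({0}ᶜ : Set E) → E) (Subtype.val ⁻¹' (norm ⁻¹' R)) := by
        rw [comap_subtype_coe_apply (measurableSet_singleton _).compl,
          Subtype.image_preimage_coe, inter_comm, ← sdiff_eq,
          measure_sdiff_null (measure_singleton 0)]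
    _ = μ.toSphere univ * Measure.volumeIoiPow (Module.finrank ℝ E - 1) (Subtype.val ⁻¹' R) := by
        rw [← hpre, μ.measurePreserving_homeomorphUnitSphereProd.measure_preimage
          (MeasurableSet.univ.prod hmeas).nullMeasurableSet, Measure.prod_prod]
    _ = _ := by
        rw [Measure.volumeIoiPow, withDensity_apply _ hmeas,
          setLIntegral_subtype measurableSet_Ioi _
            fun r ↦ ENNReal.ofReal (r ^ (Module.finrank ℝ E - 1)),
          Subtype.image_preimage_coe]

lemma lintegral_Ioo_rpow_sub_one {a δ : ℝ} (ha : 0 < a) (hδ : 0 ≤ δ) :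
    ∫⁻ r in Ioo 0 δ, ENNReal.ofReal (r ^ (a - 1)) = ENNReal.ofReal (δ ^ a / a) := by
  have hint : IntegrableOn (fun r : ℝ ↦ r ^ (a - 1)) (Ioc 0 δ) :=
    (intervalIntegrable_iff_integrableOn_Ioc_of_le hδ).1
      (intervalIntegral.intervalIntegrable_rpow' (by linarith))
  have hnonneg : 0 ≤ᵐ[volume.restrict (Ioc 0 δ)] fun r : ℝ ↦ r ^ (a - 1) := by
    filter_upwards [ae_restrict_mem measurableSet_Ioc] with r hr
    exact rpow_nonneg hr.1.le _
  rw [Measure.restrict_congr_set Ioo_ae_eq_Ioc, ← ofReal_integral_eq_lintegral_ofReal hint hnonneg,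
    ← intervalIntegral.integral_of_le hδ, integral_rpow (Or.inl (by linarith)), sub_add_cancel,
    zero_rpow ha.ne', sub_zero]

lemma lintegral_rpow_sub_one_le_add {a b δ : ℝ} (ha : 0 < a) (hab : a ≤ b) (hδ : 0 < δ)
    {R : Set ℝ} (hR : R ⊆ Ioi 0) :
    ∫⁻ r in R, ENNReal.ofReal (r ^ (a - 1)) ≤ ENNReal.ofReal (δ ^ a / a) +
      ENNReal.ofReal (δ ^ (a - b)) * ∫⁻ r in R, ENNReal.ofReal (r ^ (b - 1)) := by
  rw [← lintegral_inter_add_sdiff _ R (measurableSet_Iio (a := δ))]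
  refine add_le_add ?_ ?_
  · rw [← lintegral_Ioo_rpow_sub_one ha hδ.le]
    exact lintegral_mono_set fun r hr ↦ ⟨hR hr.1, hr.2⟩
  · rw [← lintegral_const_mul' _ _ ENNReal.ofReal_ne_top]
    refine (setLIntegral_mono (by fun_prop) fun r hr ↦ ?_).trans (lintegral_mono_set sdiff_subset)
    have hr0 : 0 < r := hR hr.1
    have hδr : δ ≤ r := not_lt.1 hr.2
    rw [← ENNReal.ofReal_mul (by positivity)]
    refine ENNReal.ofReal_le_ofReal ?_
    calc r ^ (a - 1) = r ^ (a - b) * r ^ (b - 1) := by rw [← rpow_add hr0]; ring_nf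
      _ ≤ δ ^ (a - b) * r ^ (b - 1) := by
        gcongr ?_ * _
        exact rpow_le_rpow_of_nonpos hδ hδr (by linarith)

lemma lintegral_rpow_sub_one_le_rpow {a b : ℝ} (ha : 0 < a) (hab : a ≤ b) {R : Set ℝ}
    (hR : R ⊆ Ioi 0) :
    ∫⁻ r in R, ENNReal.ofReal (r ^ (a - 1)) ≤ ENNReal.ofReal (a⁻¹ + 1) *
      (∫⁻ r in R, ENNReal.ofReal (r ^ (b - 1))) ^ (a / b) := by
  have hb : 0 < b := ha.trans_le hab
  rcases eq_or_ne (∫⁻ r in R, ENNReal.ofReal (r ^ (b - 1))) 0 with h0 | h0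
  · have hzero : ∀ᵐ _ ∂volume.restrict R, False := by
      filter_upwards [(lintegral_eq_zero_iff (by fun_prop)).1 h0,
        ae_restrict_of_ae_restrict_of_subset hR (ae_restrict_mem measurableSet_Ioi)] with _ hr hr0
      exact (ENNReal.ofReal_pos.2 (rpow_pos_of_pos hr0 _)).ne' hr
    rw [Filter.eventually_false_iff_eq_bot, ae_eq_bot] at hzero
    simp [hzero]
  rcases eq_or_ne (∫⁻ r in R, ENNReal.ofReal (r ^ (b - 1))) ⊤ with htop | htop
  · rw [htop, ENNReal.top_rpow_of_pos (by positivity),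
      ENNReal.mul_top (ENNReal.ofReal_pos.2 (by positivity)).ne']
    exact le_top
  obtain ⟨M, hM, hMeq⟩ : ∃ M : ℝ, 0 < M ∧
      ∫⁻ r in R, ENNReal.ofReal (r ^ (b - 1)) = ENNReal.ofReal M :=
    ⟨_, ENNReal.toReal_pos h0 htop, (ENNReal.ofReal_toReal htop).symm⟩
  -- `δ = M ^ b⁻¹` makes both terms of the splitting bound proportional to `M ^ (a / b)`.
  have hfirst : (M ^ b⁻¹) ^ a = M ^ (a / b) := by
    rw [← rpow_mul hM.le, inv_mul_eq_div]
  have hsecond : (M ^ b⁻¹) ^ (a - b) * M = M ^ (a / b) := by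
    rw [← rpow_mul hM.le, ← rpow_add_one hM.ne']
    congr 1
    field
  refine (lintegral_rpow_sub_one_le_add ha hab (rpow_pos_of_pos hM b⁻¹) hR).trans_eq ?_
  rw [hMeq, ENNReal.ofReal_rpow_of_pos hM, ← ENNReal.ofReal_mul (by positivity), hfirst, hsecond,
    ← ENNReal.ofReal_add (by positivity) (by positivity), ← ENNReal.ofReal_mul (by positivity)]
  congr 1
  ring

lemma mul_setLIntegral_le_setLIntegral_image_mul {c : ℝ} (hc : 0 < c) {S : Set ℝ}
    (hS : MeasurableSet S) {w : ℝ → ℝ≥0∞} (hw : ∀ t ∈ S, w t ≤ w (c * t)) :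
    ENNReal.ofReal c * ∫⁻ t in S, w t ≤ ∫⁻ t in (c * ·) '' S, w t := by
  rw [lintegral_image_eq_lintegral_abs_deriv_mul hS
      (fun t _ ↦ (hasDerivAt_const_mul c).hasDerivWithinAt) (mul_right_injective₀ hc.ne').injOn,
    ← lintegral_const_mul' _ _ ENNReal.ofReal_ne_top, abs_of_pos hc]
  exact setLIntegral_mono' hS fun t ht ↦ mul_le_mul_right (hw t ht) _

end RadiusIntegrals

section Height

/-- The height over the equatorial hyperplane of the point of the unit sphere whose stereographic
projection from the south pole has norm `r`. -/
noncomputable def stereoHeight (r : ℝ) : ℝ := (1 - r ^ 2) / (1 + r ^ 2)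

/-- The density, with respect to the height `t ∈ (-1, 1)`, of the measure `r ^ (a - 1) dr`
transported by `t = stereoHeight r`. -/
noncomputable def heightDensity (a t : ℝ) : ℝ := ((1 - t) / (1 + t)) ^ ((a - 2) / 2) / (1 + t) ^ 2

/-- The integral of `r ^ (a - 1)` over the stereographic radii `r > 0` whose height lies in `B`. For
`a` a natural number this is, up to a constant, the `a`-dimensional measure of the stereographic
projection of the radial set with heights in `B`. -/
noncomputable def radialMass (a : ℝ) (B : Set ℝ) : ℝ≥0∞ :=
  ∫⁻ r in Ioi 0 ∩ stereoHeight ⁻¹' B, ENNReal.ofReal (r ^ (a - 1))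

lemma measurable_stereoHeight : Measurable stereoHeight := by
  unfold stereoHeight
  fun_prop

lemma neg_one_lt_stereoHeight (r : ℝ) : -1 < stereoHeight r := by
  rw [stereoHeight, lt_div_iff₀ (by positivity)]
  linarith

lemma stereoHeight_lt_one {r : ℝ} (hr : 0 < r) : stereoHeight r < 1 := by
  rw [stereoHeight, div_lt_one (by positivity)]
  linarith [pow_pos hr 2]

lemma one_add_stereoHeight (r : ℝ) : 1 + stereoHeight r = 2 / (1 + r ^ 2) := by
  rw [stereoHeight]
  field

lemma one_sub_div_one_add_stereoHeight (r : ℝ) :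
    (1 - stereoHeight r) / (1 + stereoHeight r) = r ^ 2 := by
  rw [one_add_stereoHeight, stereoHeight]
  field

lemma stereoHeight_sqrt {t : ℝ} (ht : t ∈ Ioo (-1) 1) :
    stereoHeight √((1 - t) / (1 + t)) = t := by
  have hpos : 0 < 1 + t := by linarith [ht.1]
  rw [stereoHeight, sq_sqrt (div_nonneg (by linarith [ht.2]) hpos.le)]
  field

lemma stereoHeight_injOn : InjOn stereoHeight (Ioi 0) := fun r hr q hq h ↦ by
  rw [← pow_left_inj₀ (le_of_lt hr) (le_of_lt hq) two_ne_zero,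
    ← one_sub_div_one_add_stereoHeight, h, one_sub_div_one_add_stereoHeight]

lemma stereoHeight_image_Ioi : stereoHeight '' Ioi 0 = Ioo (-1) 1 := by
  refine Subset.antisymm ?_ fun t ht ↦ ⟨_, ?_, stereoHeight_sqrt ht⟩
  · rintro _ ⟨r, hr, rfl⟩
    exact ⟨neg_one_lt_stereoHeight r, stereoHeight_lt_one hr⟩
  · exact sqrt_pos.2 (div_pos (by linarith [ht.2]) (by linarith [ht.1]))

lemma hasDerivAt_stereoHeight (r : ℝ) :
    HasDerivAt stereoHeight (-(4 * r / (1 + r ^ 2) ^ 2)) r := by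
  have hnum : HasDerivAt (fun r : ℝ ↦ 1 - r ^ 2) (-(2 * r)) r := by
    simpa using (hasDerivAt_pow 2 r).const_sub 1
  have hden : HasDerivAt (fun r : ℝ ↦ 1 + r ^ 2) (2 * r) r := by
    simpa using (hasDerivAt_pow 2 r).const_add 1
  refine (hnum.div hden (by positivity)).congr_deriv ?_
  field

lemma heightDensity_stereoHeight (a : ℝ) {r : ℝ} (hr : 0 < r) :
    4 * r / (1 + r ^ 2) ^ 2 * heightDensity a (stereoHeight r) = r ^ (a - 1) := by
  have hpow : r ^ (a - 1) = r ^ (a - 2) * r := by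
    rw [← rpow_add_one hr.ne']
    ring_nf
  rw [heightDensity, one_sub_div_one_add_stereoHeight, one_add_stereoHeight,
    ← rpow_natCast_mul hr.le, Nat.cast_two, mul_div_cancel₀ _ two_ne_zero, hpow]
  field

lemma radialMass_eq_lintegral_heightDensity (a : ℝ) {B : Set ℝ} (hB : MeasurableSet B) :
    radialMass a B = ∫⁻ t in Ioo (-1) 1 ∩ B, ENNReal.ofReal (heightDensity a t) := by
  have hmeas : MeasurableSet (Ioi 0 ∩ stereoHeight ⁻¹' B) :=
    measurableSet_Ioi.inter (measurable_stereoHeight hB)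
  rw [← stereoHeight_image_Ioi, ← image_inter_preimage,
    lintegral_image_eq_lintegral_abs_deriv_mul hmeas
      (fun r _ ↦ (hasDerivAt_stereoHeight r).hasDerivWithinAt)
      (stereoHeight_injOn.mono inter_subset_left)]
  refine setLIntegral_congr_fun hmeas fun r hr ↦ ?_
  have hr0 : 0 < r := hr.1
  rw [abs_neg, ← ENNReal.ofReal_mul (abs_nonneg _), abs_of_pos (by positivity),
    heightDensity_stereoHeight a hr0]

lemma antitoneOn_heightDensity {a : ℝ} (ha : 2 ≤ a) :
    AntitoneOn (heightDensity a) (Ioo (-1) 1) := by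
  intro s hs t ht hst
  have hs0 : 0 < 1 + s := by linarith [hs.1]
  have hs1 : 0 ≤ 1 - s := by linarith [hs.2]
  have ht0 : 0 < 1 + t := by linarith [ht.1]
  have ht1 : 0 ≤ 1 - t := by linarith [ht.2]
  unfold heightDensity
  gcongr

lemma mul_radialMass_preimage_mul_le {a c : ℝ} (ha : 2 ≤ a) (hc : 0 < c) (hc1 : c ≤ 1) {A : Set ℝ}
    (hA : MeasurableSet A) (hA0 : A ⊆ Ici 0) :
    ENNReal.ofReal c * radialMass a ((c * ·) ⁻¹' A) ≤ radialMass a A := by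
  have hcA : MeasurableSet ((c * ·) ⁻¹' A) := measurable_const_mul c hA
  have hcontract : ∀ t ∈ Ioo (-1) 1 ∩ (c * ·) ⁻¹' A, c * t ∈ Ioo (-1) 1 ∧ c * t ≤ t := by
    rintro t ⟨ht, htA⟩
    have ht0 : 0 ≤ t := nonneg_of_mul_nonneg_right (hA0 htA) hc
    have hle : c * t ≤ t := mul_le_of_le_one_left ht0 hc1
    exact ⟨⟨by linarith [mem_Ici.1 (hA0 htA)], hle.trans_lt ht.2⟩, hle⟩
  rw [radialMass_eq_lintegral_heightDensity a hcA, radialMass_eq_lintegral_heightDensity a hA]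
  refine (mul_setLIntegral_le_setLIntegral_image_mul hc (measurableSet_Ioo.inter hcA)
    fun t ht ↦ ?_).trans (lintegral_mono_set ?_)
  · obtain ⟨hct, hle⟩ := hcontract t ht
    exact ENNReal.ofReal_le_ofReal (antitoneOn_heightDensity ha hct ht.1 hle)
  · rintro _ ⟨t, ht, rfl⟩
    exact ⟨(hcontract t ht).1, ht.2⟩

end Height

section UnitSphereMass

/-- The total mass of the polar-coordinates measure on the unit sphere of `ℝᵐ`, for the
normalization of Lebesgue measure given by `μH[m]`. -/
noncomputable def unitSphereMass (m : ℕ) : ℝ≥0∞ :=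
  (μH[(m : ℝ)] : Measure (EuclideanSpace ℝ (Fin m))).toSphere univ

lemma unitSphereMass_ne_zero {m : ℕ} (hm : m ≠ 0) : unitSphereMass m ≠ 0 := by
  have : NeZero m := ⟨hm⟩
  exact Measure.measure_univ_ne_zero.2 (Measure.toSphere_ne_zero _)

lemma unitSphereMass_ne_top (m : ℕ) : unitSphereMass m ≠ ⊤ := measure_ne_top _ _

lemma hausdorffMeasure_stereoHeight_norm_mem {m : ℕ} (hm : m ≠ 0) {B : Set ℝ}
    (hB : MeasurableSet B) :
    μH[(m : ℝ)] {y : EuclideanSpace ℝ (Fin m) | stereoHeight ‖y‖ ∈ B} =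
      unitSphereMass m * radialMass m B := by
  have : NeZero m := ⟨hm⟩
  refine (addHaar_preimage_norm μH[(m : ℝ)] (measurable_stereoHeight hB)).trans ?_
  simp only [unitSphereMass, radialMass, finrank_euclideanSpace_fin, ← rpow_natCast,
    Nat.cast_pred (Nat.pos_of_ne_zero hm)]

end UnitSphereMass

lemma lipschitzOnWith_inversion {V P : Type*} [NormedAddCommGroup V] [InnerProductSpace ℝ V]
    [MetricSpace P] [NormedAddTorsor V P] (c : P) (R : ℝ) {δ : ℝ} (hδ : 0 < δ) :
    LipschitzOnWith (Real.toNNReal (R ^ 2 / δ ^ 2)) (EuclideanGeometry.inversion c R)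
      {x | δ ≤ dist x c} := by
  refine LipschitzOnWith.of_dist_le_mul fun x hx y hy ↦ ?_
  have hx0 : 0 < dist x c := hδ.trans_le hx
  have hy0 : 0 < dist y c := hδ.trans_le hy
  rw [EuclideanGeometry.dist_inversion_inversion (dist_pos.1 hx0) (dist_pos.1 hy0),
    Real.coe_toNNReal _ (by positivity)]
  gcongr
  calc δ ^ 2 = δ * δ := sq δ
    _ ≤ dist x c * dist y c := mul_le_mul hx hy hδ.le hx0.le

section Stereographic

variable {X : Type*} [NormedAddCommGroup X] [InnerProductSpace ℝ X]

/-- The radial subset of the unit sphere about the axis `u` with heights in `B`. -/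
def radialSet (u : X) (B : Set ℝ) : Set X := {x | ‖x‖ = 1 ∧ ⟪x, u⟫ ∈ B}

/-- The points of the hyperplane `uᗮ` that project stereographically from `-u` to the points of the
unit sphere with heights in `B`. -/
def radialShadow (u : X) (B : Set ℝ) : Set X := {y | ⟪y, u⟫ = 0 ∧ stereoHeight ‖y‖ ∈ B}

/-- The inversion exchanging the unit sphere and the hyperplane `uᗮ`, for a unit vector `u`. On each
of them it is the stereographic projection from `-u` onto the other. -/
noncomputable def stereoInversion (u : X) : X → X := EuclideanGeometry.inversion (-u) √2

lemma stereoInversion_involutive (u : X) : Function.Involutive (stereoInversion u) :=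
  EuclideanGeometry.inversion_involutive _ (by positivity)

lemma stereoInversion_apply (u x : X) :
    stereoInversion u x = (2 / dist x (-u) ^ 2) • (x + u) - u := by
  rw [stereoInversion, EuclideanGeometry.inversion, div_pow, sq_sqrt zero_le_two]
  simp only [vsub_eq_sub, sub_neg_eq_add, vadd_eq_add, ← sub_eq_add_neg]

lemma stereoInversion_mem {V : Submodule ℝ X} {u x : X} (hu : u ∈ V) (hx : x ∈ V) :
    stereoInversion u x ∈ V := by
  rw [stereoInversion_apply]
  exact V.sub_mem (V.smul_mem _ (V.add_mem hx hu)) hu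

variable {u : X} (hu : ‖u‖ = 1)
include hu

lemma dist_neg_sq_of_norm_eq_one (x : X) : dist x (-u) ^ 2 = ‖x‖ ^ 2 + 2 * ⟪x, u⟫ + 1 := by
  rw [dist_eq_norm, sub_neg_eq_add, norm_add_sq_real, hu, one_pow]

lemma inner_stereoInversion (x : X) :
    ⟪stereoInversion u x, u⟫ = 2 / dist x (-u) ^ 2 * (⟪x, u⟫ + 1) - 1 := by
  rw [stereoInversion_apply, inner_sub_left, real_inner_smul_left, inner_add_left,
    real_inner_self_eq_norm_sq, hu, one_pow]

lemma inner_stereoInversion_of_inner_eq_zero {y : X} (hy : ⟪y, u⟫ = 0) :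
    ⟪stereoInversion u y, u⟫ = stereoHeight ‖y‖ := by
  rw [inner_stereoInversion hu, dist_neg_sq_of_norm_eq_one hu, hy, stereoHeight]
  field

lemma norm_stereoInversion_of_inner_eq_zero {y : X} (hy : ⟪y, u⟫ = 0) :
    ‖stereoInversion u y‖ = 1 := by
  have hdist : dist (stereoInversion u y) (-u) ^ 2 = 4 / (1 + ‖y‖ ^ 2) := by
    rw [stereoInversion, EuclideanGeometry.dist_inversion_center, div_pow,
      dist_neg_sq_of_norm_eq_one hu, hy, sq_sqrt zero_le_two]
    ring_nf
  rw [dist_neg_sq_of_norm_eq_one hu, inner_stereoInversion_of_inner_eq_zero hu hy] at hdist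
  have hsq : ‖stereoInversion u y‖ ^ 2 = 1 := by
    linear_combination hdist - 2 * one_add_stereoHeight ‖y‖
  exact (pow_eq_one_iff_of_nonneg (norm_nonneg _) two_ne_zero).1 hsq

lemma inner_stereoInversion_of_norm_eq_one {x : X} (hx : ‖x‖ = 1) (hxu : 0 ≤ ⟪x, u⟫) :
    ⟪stereoInversion u x, u⟫ = 0 := by
  rw [inner_stereoInversion hu, dist_neg_sq_of_norm_eq_one hu, hx]
  field

variable {B : Set ℝ} (hB : B ⊆ Ici 0)
include hB

lemma stereoInversion_image_radialShadow {V : Submodule ℝ X} (huV : u ∈ V) :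
    stereoInversion u '' (radialShadow u B ∩ V) = radialSet u B ∩ V := by
  refine Subset.antisymm ?_ fun x hx ↦ ⟨stereoInversion u x, ?_, stereoInversion_involutive u x⟩
  · rintro _ ⟨y, ⟨⟨hy, hyB⟩, hyV⟩, rfl⟩
    rw [← inner_stereoInversion_of_inner_eq_zero hu hy] at hyB
    exact ⟨⟨norm_stereoInversion_of_inner_eq_zero hu hy, hyB⟩, stereoInversion_mem huV hyV⟩
  · obtain ⟨⟨hx1, hxB⟩, hxV⟩ := hx
    have hy := inner_stereoInversion_of_norm_eq_one hu hx1 (hB hxB)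
    refine ⟨⟨hy, ?_⟩, stereoInversion_mem huV hxV⟩
    rwa [← inner_stereoInversion_of_inner_eq_zero hu hy, stereoInversion_involutive]

variable [MeasurableSpace X] [BorelSpace X] {d : ℝ} (hd : 0 ≤ d) {V : Submodule ℝ X} (huV : u ∈ V)
include hd huV

lemma hausdorffMeasure_radialSet_le_radialShadow :
    μH[d] (radialSet u B ∩ V) ≤ 2 ^ d * μH[d] (radialShadow u B ∩ V) := by
  have hfar : radialShadow u B ∩ V ⊆ {y | 1 ≤ dist y (-u)} := fun y hy ↦
    one_le_sq_iff₀ dist_nonneg |>.1 (by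
      rw [dist_neg_sq_of_norm_eq_one hu, hy.1.1]
      linarith [sq_nonneg ‖y‖])
  rw [← stereoInversion_image_radialShadow hu hB huV]
  simpa [stereoInversion] using
    ((lipschitzOnWith_inversion (-u) √2 one_pos).mono hfar).hausdorffMeasure_image_le hd

lemma hausdorffMeasure_radialShadow_le_radialSet :
    μH[d] (radialShadow u B ∩ V) ≤ μH[d] (radialSet u B ∩ V) := by
  have hfar : radialSet u B ∩ V ⊆ {x | √2 ≤ dist x (-u)} := fun x hx ↦
    (sqrt_le_left dist_nonneg).2 (by
      rw [dist_neg_sq_of_norm_eq_one hu, hx.1.1]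
      linarith [mem_Ici.1 (hB hx.1.2)])
  rw [← (stereoInversion_involutive u).injective.preimage_image (radialShadow u B ∩ V),
    ← (stereoInversion_involutive u).image_eq_preimage_symm,
    stereoInversion_image_radialShadow hu hB huV]
  simpa [stereoInversion] using
    ((lipschitzOnWith_inversion (-u) √2 (by positivity : 0 < √2)).mono
      hfar).hausdorffMeasure_image_le hd

end Stereographic

section RadialSetMeasure

variable {X : Type*} [NormedAddCommGroup X] [InnerProductSpace ℝ X] [FiniteDimensional ℝ X]

lemma exists_linearIsometry_range_eq {m : ℕ} {W : Submodule ℝ X} (hW : Module.finrank ℝ W = m) :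
    ∃ ι : EuclideanSpace ℝ (Fin m) →ₗᵢ[ℝ] X, range ι = W := by
  let e := ((stdOrthonormalBasis ℝ W).reindex (finCongr hW)).repr.symm
  refine ⟨W.subtypeₗᵢ.comp e.toLinearIsometry, ?_⟩
  simp [range_comp, e.surjective.range_eq]

lemma finrank_inf_orthogonal_singleton {m : ℕ} {V : Submodule ℝ X}
    (hV : Module.finrank ℝ V = m + 1) {u : X} (hu : u ≠ 0) (huV : u ∈ V) :
    Module.finrank ℝ ↥((ℝ ∙ u)ᗮ ⊓ V) = m := by
  refine Submodule.finrank_add_inf_finrank_orthogonal' (K₁ := ℝ ∙ u) (by simpa using huV) ?_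
  rw [finrank_span_singleton hu, hV, add_comm]

variable [MeasurableSpace X] [BorelSpace X] {m : ℕ} (hm : m ≠ 0) {V : Submodule ℝ X}
  (hV : Module.finrank ℝ V = m + 1) {u : X} (hu : ‖u‖ = 1) (huV : u ∈ V) {B : Set ℝ}
  (hB : MeasurableSet B)
include hm hV hu huV hB

lemma hausdorffMeasure_radialShadow :
    μH[(m : ℝ)] (radialShadow u B ∩ V) = unitSphereMass m * radialMass m B := by
  have hu0 : u ≠ 0 := norm_ne_zero_iff.1 (hu ▸ one_ne_zero)
  obtain ⟨ι, hι⟩ := exists_linearIsometry_range_eq (finrank_inf_orthogonal_singleton hV hu0 huV)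
  have himage : radialShadow u B ∩ V = ι '' {y | stereoHeight ‖y‖ ∈ B} := by
    have hpre : {y | stereoHeight ‖y‖ ∈ B} = ι ⁻¹' {x | stereoHeight ‖x‖ ∈ B} := by
      simp only [preimage_ofPred_eq, ι.norm_map]
    rw [hpre, image_preimage_eq_inter_range, hι]
    ext x
    simp only [radialShadow, mem_inter_iff, mem_ofPred_eq, SetLike.mem_coe, Submodule.mem_inf,
      Submodule.mem_orthogonal_singleton_iff_inner_left]
    tauto
  rw [himage, ι.isometry.hausdorffMeasure_image (Or.inl m.cast_nonneg),
    hausdorffMeasure_stereoHeight_norm_mem hm hB]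

variable (hB0 : B ⊆ Ici 0)
include hB0

lemma hausdorffMeasure_radialSet_le_radialMass :
    μH[(m : ℝ)] (radialSet u B ∩ V) ≤ 2 ^ m * (unitSphereMass m * radialMass m B) := by
  rw [← hausdorffMeasure_radialShadow hm hV hu huV hB, ← ENNReal.rpow_natCast]
  exact hausdorffMeasure_radialSet_le_radialShadow hu hB0 m.cast_nonneg huV

lemma unitSphereMass_mul_radialMass_le_radialSet :
    unitSphereMass m * radialMass m B ≤ μH[(m : ℝ)] (radialSet u B ∩ V) := by
  rw [← hausdorffMeasure_radialShadow hm hV hu huV hB]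
  exact hausdorffMeasure_radialShadow_le_radialSet hu hB0 m.cast_nonneg huV

end RadialSetMeasure

section Endpoint

/-- The constant of the estimate for radial sets in the hemisphere about the axis. -/
noncomputable def hemisphereConst (n k : ℕ) : ℝ≥0∞ :=
  2 ^ k * unitSphereMass k *
    (ENNReal.ofReal ((k : ℝ)⁻¹ + 1) * (unitSphereMass n)⁻¹ ^ ((k : ℝ) / n))

lemma hemisphereConst_ne_top {n : ℕ} (hn : n ≠ 0) (k : ℕ) : hemisphereConst n k ≠ ⊤ := by
  have hinv : (unitSphereMass n)⁻¹ ^ ((k : ℝ) / n) ≠ ⊤ :=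
    ENNReal.rpow_ne_top_of_nonneg (by positivity)
      (ENNReal.inv_ne_top.2 (unitSphereMass_ne_zero hn))
  exact ENNReal.mul_ne_top
    (ENNReal.mul_ne_top (ENNReal.pow_ne_top ENNReal.ofNat_ne_top) (unitSphereMass_ne_top k))
    (ENNReal.mul_ne_top ENNReal.ofReal_ne_top hinv)

variable {X : Type*} [NormedAddCommGroup X] [InnerProductSpace ℝ X]

lemma radialSet_inter_norm_eq_one (u : X) (B : Set ℝ) :
    radialSet u B ∩ {x | ‖x‖ = 1} = radialSet u B :=
  inter_eq_left.2 fun _ hx ↦ hx.1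

lemma radialSet_neg_axis (u : X) (B : Set ℝ) : radialSet (-u) (-B) = radialSet u B := by
  ext x
  simp only [radialSet, mem_ofPred_eq, inner_neg_right, neg_mem_neg]

lemma radialSet_mono (u : X) {A B : Set ℝ} (h : A ⊆ B) : radialSet u A ⊆ radialSet u B :=
  fun _ hx ↦ ⟨hx.1, h hx.2⟩

lemma radialSet_eq_union_hemispheres (u : X) (A : Set ℝ) :
    radialSet u A = radialSet u (A ∩ Ici 0) ∪ radialSet (-u) (-A ∩ Ici 0) := by
  have hneg : -A ∩ Ici 0 = -(A ∩ Iic 0) := by simp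
  rw [hneg, radialSet_neg_axis]
  refine Subset.antisymm (fun x hx ↦ ?_)
    (union_subset (radialSet_mono u inter_subset_left) (radialSet_mono u inter_subset_left))
  exact (le_total 0 ⟪x, u⟫).imp (fun h ↦ ⟨hx.1, hx.2, h⟩) fun h ↦ ⟨hx.1, hx.2, h⟩

lemma radialSet_inter_eq_inv_norm_smul_projection (V : Submodule ℝ X)
    [V.HasOrthogonalProjection] {o : X} (ho : V.orthogonalProjectionOnto o ≠ 0) (A : Set ℝ) :
    radialSet o A ∩ V =
      radialSet (‖V.orthogonalProjectionOnto o‖⁻¹ • (V.orthogonalProjectionOnto o : X))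
        ((‖V.orthogonalProjectionOnto o‖ * ·) ⁻¹' A) ∩ V := by
  ext x
  refine and_congr_left fun hx ↦ and_congr_right fun _ ↦ ?_
  rw [mem_preimage, real_inner_smul_right, mul_inv_cancel_left₀ (norm_ne_zero_iff.2 ho)]
  congr! 1
  exact (V.inner_orthogonalProjectionOnto_eq_of_mem_left ⟨x, hx⟩ o).symm

variable [FiniteDimensional ℝ X] [MeasurableSpace X] [BorelSpace X] {n k : ℕ} (hk : 2 ≤ k)
  (hkn : k ≤ n) (hX : Module.finrank ℝ X = n + 1) {V : Submodule ℝ X}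
  (hV : Module.finrank ℝ V = k + 1) {o : X} (ho : ‖o‖ = 1) {A : Set ℝ} (hA : MeasurableSet A)

include hk hV ho hA in
lemma norm_orthogonalProjectionOnto_mul_hausdorffMeasure_le_radialMass (hA0 : A ⊆ Ici 0) :
    ENNReal.ofReal ‖V.orthogonalProjectionOnto o‖ * μH[(k : ℝ)] (radialSet o A ∩ V) ≤
      2 ^ k * unitSphereMass k * radialMass k A := by
  rcases eq_or_ne (V.orthogonalProjectionOnto o) 0 with hp | hp
  · simp [hp]
  have hc : 0 < ‖V.orthogonalProjectionOnto o‖ := norm_pos_iff.2 hp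
  have hc1 : ‖V.orthogonalProjectionOnto o‖ ≤ 1 :=
    (V.norm_orthogonalProjectionOnto_apply_le o).trans_eq ho
  rw [radialSet_inter_eq_inv_norm_smul_projection V hp A]
  set c := ‖V.orthogonalProjectionOnto o‖
  have hunit : ‖c⁻¹ • (V.orthogonalProjectionOnto o : X)‖ = 1 := by
    rw [norm_smul, norm_inv, norm_norm, ← Submodule.coe_norm, inv_mul_cancel₀ hc.ne']
  have hmem : c⁻¹ • (V.orthogonalProjectionOnto o : X) ∈ V :=
    V.smul_mem _ (V.orthogonalProjectionOnto o).2
  calc ENNReal.ofReal c *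
        μH[(k : ℝ)] (radialSet (c⁻¹ • (V.orthogonalProjectionOnto o : X)) ((c * ·) ⁻¹' A) ∩ V)
      ≤ ENNReal.ofReal c * (2 ^ k * (unitSphereMass k * radialMass k ((c * ·) ⁻¹' A))) := by
        gcongr
        exact hausdorffMeasure_radialSet_le_radialMass (by lia) hV hunit hmem
          (measurable_const_mul c hA) fun t ht ↦ nonneg_of_mul_nonneg_right (hA0 ht) hc
    _ = 2 ^ k * unitSphereMass k * (ENNReal.ofReal c * radialMass k ((c * ·) ⁻¹' A)) := by ring
    _ ≤ 2 ^ k * unitSphereMass k * radialMass k A := by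
        gcongr
        exact mul_radialMass_preimage_mul_le (mod_cast hk) hc hc1 hA hA0

include hX ho hA in
lemma radialMass_le_hausdorffMeasure (hn : n ≠ 0) (hA0 : A ⊆ Ici 0) :
    radialMass n A ≤ (unitSphereMass n)⁻¹ * μH[(n : ℝ)] (radialSet o A) := by
  rw [← ENNReal.mul_le_iff_le_inv (unitSphereMass_ne_zero hn) (unitSphereMass_ne_top n)]
  simpa using unitSphereMass_mul_radialMass_le_radialSet hn (finrank_top ℝ X ▸ hX) ho
    Submodule.mem_top hA hA0

include hk hkn hX hV ho hA

lemma hemisphere_kplane_endpoint (hA0 : A ⊆ Ici 0) :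
    ENNReal.ofReal ‖V.orthogonalProjectionOnto o‖ * μH[(k : ℝ)] (radialSet o A ∩ V) ≤
      hemisphereConst n k * μH[(n : ℝ)] (radialSet o A) ^ ((k : ℝ) / n) := by
  have hk0 : (0 : ℝ) < k := by positivity
  calc ENNReal.ofReal ‖V.orthogonalProjectionOnto o‖ * μH[(k : ℝ)] (radialSet o A ∩ V)
      ≤ 2 ^ k * unitSphereMass k * radialMass k A :=
        norm_orthogonalProjectionOnto_mul_hausdorffMeasure_le_radialMass hk hV ho hA hA0
    _ ≤ 2 ^ k * unitSphereMass k *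
        (ENNReal.ofReal ((k : ℝ)⁻¹ + 1) * radialMass n A ^ ((k : ℝ) / n)) := by
        gcongr
        exact lintegral_rpow_sub_one_le_rpow hk0 (mod_cast hkn) inter_subset_left
    _ ≤ 2 ^ k * unitSphereMass k * (ENNReal.ofReal ((k : ℝ)⁻¹ + 1) *
        ((unitSphereMass n)⁻¹ * μH[(n : ℝ)] (radialSet o A)) ^ ((k : ℝ) / n)) := by
        gcongr
        exact radialMass_le_hausdorffMeasure hX ho hA (by lia) hA0
    _ = hemisphereConst n k * μH[(n : ℝ)] (radialSet o A) ^ ((k : ℝ) / n) := by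
        rw [ENNReal.mul_rpow_of_nonneg _ _ (by positivity), hemisphereConst]
        ring

lemma radialSet_kplane_endpoint :
    ENNReal.ofReal ‖V.orthogonalProjectionOnto o‖ * μH[(k : ℝ)] (radialSet o A ∩ V) ≤
      2 * hemisphereConst n k * μH[(n : ℝ)] (radialSet o A) ^ ((k : ℝ) / n) := by
  have hpos := hemisphere_kplane_endpoint hk hkn hX hV ho (hA.inter measurableSet_Ici)
    inter_subset_right
  have hneg := hemisphere_kplane_endpoint hk hkn hX hV (norm_neg o ▸ ho)
    (hA.neg.inter measurableSet_Ici) inter_subset_right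
  rw [map_neg, norm_neg] at hneg
  have hunion := radialSet_eq_union_hemispheres o A
  grw [hunion, union_inter_distrib_right, measure_union_le, mul_add, hpos, hneg, two_mul, add_mul]
  gcongr
  · exact subset_union_left
  · exact subset_union_right

end Endpoint

theorem spherical_kplane_endpoint_general (n k : ℕ) (hk : 2 ≤ k) (hkn : k ≤ n) :
    ∃ C : ℝ, 0 < C ∧
      ∀ (X : Type*) [NormedAddCommGroup X] [InnerProductSpace ℝ X] [FiniteDimensional ℝ X]
        [MeasurableSpace X] [BorelSpace X], Module.finrank ℝ X = n + 1 →
        ∀ o : X, ‖o‖ = 1 → ∀ A : Set ℝ, MeasurableSet A →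
        ∀ V : Submodule ℝ X, Module.finrank ℝ V = k + 1 →
          ENNReal.ofReal ‖V.orthogonalProjectionOnto o‖ * μH[(k : ℝ)] (radialSet o A ∩ V) ≤
            ENNReal.ofReal C * μH[(n : ℝ)] (radialSet o A) ^ ((k : ℝ) / n) := by
  have htop : 2 * hemisphereConst n k ≠ ⊤ :=
    ENNReal.mul_ne_top ENNReal.ofNat_ne_top (hemisphereConst_ne_top (by lia) k)
  refine ⟨(2 * hemisphereConst n k).toReal + 1, by positivity, ?_⟩
  intro X _ _ _ _ _ hX o ho A hA V hV
  refine (radialSet_kplane_endpoint hk hkn hX hV ho hA).trans ?_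
  gcongr
  exact (ENNReal.le_ofReal_iff_toReal_le htop (by positivity)).2 (by linarith)

theorem spherical_kplane_endpoint (n k : ℕ) (hn : 3 ≤ n) (hk : 2 ≤ k) (hkn : k ≤ n - 1) :
    ∃ C : ℝ, 0 < C ∧
      ∀ (E : Set (EuclideanSpace ℝ (Fin (n + 1)))) (A : Set ℝ), MeasurableSet A →
        E = {x : EuclideanSpace ℝ (Fin (n + 1)) |
              ‖x‖ = 1 ∧ ⟪x, EuclideanSpace.single (Fin.last n) (1 : ℝ)⟫ ∈ A} →
        ∀ V : Submodule ℝ (EuclideanSpace ℝ (Fin (n + 1))),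
          Module.finrank ℝ V = k + 1 →
          ENNReal.ofReal ‖Submodule.orthogonalProjectionOnto V (EuclideanSpace.single (Fin.last n) (1 : ℝ))‖ *
              μH[(k : ℝ)] (E ∩ {x : EuclideanSpace ℝ (Fin (n + 1)) | ‖x‖ = 1} ∩
                (V : Set (EuclideanSpace ℝ (Fin (n + 1))))) ≤
            ENNReal.ofReal C * (μH[(n : ℝ)] E) ^ ((k : ℝ) / n) := by
  obtain ⟨C, hC, hle⟩ := spherical_kplane_endpoint_general n k hk (by lia)
  refine ⟨C, hC, fun E A hA hE V hV ↦ ?_⟩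
  change E = radialSet (EuclideanSpace.single (Fin.last n) 1) A at hE
  rw [hE, radialSet_inter_norm_eq_one]
  exact hle _ finrank_euclideanSpace_fin _ (by simp) A hA V hV
end

section
/- Let p, q, r be unit vectors in ℝ^{n+1} (points of Sⁿ) such that the tangential components of p and r at q are orthogonal, i.e. ⟨p - ⟨p,q⟩q, r - ⟨r,q⟩q⟩ = 0. Set a = arccos⟨p,q⟩, b = arccos⟨q,r⟩, h = arccos⟨p,r⟩ (the geodesic side lengths of the triangle with right angle at q). Then cos h = cos a · cos b; equivalently, sin²(h/2) = sin²(a/2) + sin²(b/2) - 2·sin²(a/2)·sin²(b/2). -/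
open Real RealInnerProductSpace

/-!
For a unit vector `q`, the tangential components of `p` and `r` at `q` have inner product
`⟪p, r⟫ - ⟪p, q⟫ * ⟪q, r⟫`. On unit vectors these three inner products are the cosines of the
sides, so a right angle at `q` means `cos h = cos a * cos b`. Substituting
`cos t = 1 - 2 * sin (t / 2) ^ 2` turns this into the half-angle form.
-/

theorem inner_sub_inner_smul_sub_inner_smul_of_norm_eq_one {𝕜 E : Type*} [RCLike 𝕜]
    [SeminormedAddCommGroup E] [InnerProductSpace 𝕜 E] {q : E} (hq : ‖q‖ = 1) (p r : E) :
    inner 𝕜 (p - inner 𝕜 q p • q) (r - inner 𝕜 q r • q) =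
      inner 𝕜 p r - inner 𝕜 p q * inner 𝕜 q r := by
  have inner_q_q : inner 𝕜 q q = 1 := by simp [inner_self_eq_norm_sq_to_K, hq]
  simp only [inner_sub_left, inner_sub_right, inner_smul_left, inner_smul_right, inner_conj_symm,
    inner_q_q]
  ring

theorem cos_eq_one_sub_two_mul_sin_half_sq (t : ℝ) : cos t = 1 - 2 * sin (t / 2) ^ 2 := by
  rw [← cos_two_mul_eq_one_sub, mul_div_cancel₀ t two_ne_zero]

theorem cos_eq_cos_mul_cos_iff_sin_half_sq (a b h : ℝ) :
    cos h = cos a * cos b ↔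
      sin (h / 2) ^ 2 =
        sin (a / 2) ^ 2 + sin (b / 2) ^ 2 - 2 * sin (a / 2) ^ 2 * sin (b / 2) ^ 2 := by
  simp only [cos_eq_one_sub_two_mul_sin_half_sq]
  constructor <;> intro <;> linarith

section

variable {V : Type*} [SeminormedAddCommGroup V] [InnerProductSpace ℝ V] {p q r : V}

theorem cos_arccos_inner_of_norm_le_one (hp : ‖p‖ ≤ 1) (hq : ‖q‖ ≤ 1) :
    cos (arccos ⟪p, q⟫) = ⟪p, q⟫ := by
  have abs_inner_le_one : |⟪p, q⟫| ≤ 1 :=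
    (abs_real_inner_le_norm p q).trans (mul_le_one₀ hp (norm_nonneg q) hq)
  exact cos_arccos (abs_le.mp abs_inner_le_one).1 (abs_le.mp abs_inner_le_one).2

theorem inner_eq_inner_mul_inner_of_inner_tangential_eq_zero (hq : ‖q‖ = 1)
    (hperp : ⟪p - ⟪p, q⟫ • q, r - ⟪r, q⟫ • q⟫ = (0 : ℝ)) :
    ⟪p, r⟫ = ⟪p, q⟫ * ⟪q, r⟫ := by
  rw [← real_inner_comm p q, ← real_inner_comm r q,
    inner_sub_inner_smul_sub_inner_smul_of_norm_eq_one hq] at hperp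
  exact sub_eq_zero.mp hperp

theorem spherical_pythagoras_general (hp : ‖p‖ = 1) (hq : ‖q‖ = 1) (hr : ‖r‖ = 1)
    (hperp : ⟪p - ⟪p, q⟫ • q, r - ⟪r, q⟫ • q⟫ = (0 : ℝ)) :
    cos (arccos ⟪p, r⟫) = cos (arccos ⟪p, q⟫) * cos (arccos ⟪q, r⟫) ∧
      sin (arccos ⟪p, r⟫ / 2) ^ 2 =
        sin (arccos ⟪p, q⟫ / 2) ^ 2 + sin (arccos ⟪q, r⟫ / 2) ^ 2 -
          2 * sin (arccos ⟪p, q⟫ / 2) ^ 2 * sin (arccos ⟪q, r⟫ / 2) ^ 2 := by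
  have cos_hypotenuse :
      cos (arccos ⟪p, r⟫) = cos (arccos ⟪p, q⟫) * cos (arccos ⟪q, r⟫) := by
    rw [cos_arccos_inner_of_norm_le_one hp.le hr.le, cos_arccos_inner_of_norm_le_one hp.le hq.le,
      cos_arccos_inner_of_norm_le_one hq.le hr.le]
    exact inner_eq_inner_mul_inner_of_inner_tangential_eq_zero hq hperp
  exact ⟨cos_hypotenuse, (cos_eq_cos_mul_cos_iff_sin_half_sq _ _ _).mp cos_hypotenuse⟩

end

theorem spherical_pythagoras (n : ℕ) (p q r : EuclideanSpace ℝ (Fin (n + 1)))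
    (hp : ‖p‖ = 1) (hq : ‖q‖ = 1) (hr : ‖r‖ = 1)
    (hperp : ⟪p - ⟪p, q⟫ • q, r - ⟪r, q⟫ • q⟫ = (0 : ℝ)) :
    Real.cos (Real.arccos ⟪p, r⟫) =
        Real.cos (Real.arccos ⟪p, q⟫) * Real.cos (Real.arccos ⟪q, r⟫) ∧
      Real.sin (Real.arccos ⟪p, r⟫ / 2) ^ 2 =
        Real.sin (Real.arccos ⟪p, q⟫ / 2) ^ 2 + Real.sin (Real.arccos ⟪q, r⟫ / 2) ^ 2 -
          2 * Real.sin (Real.arccos ⟪p, q⟫ / 2) ^ 2 * Real.sin (Real.arccos ⟪q, r⟫ / 2) ^ 2 :=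
  spherical_pythagoras_general hp hq hr hperp
end

section
/- Let η₁, η₂ > 0 and p ≥ 1. Then there exists a constant K > 0, depending only on p, η₁ and η₂, such that for all real numbers 0 < a < b < 1, ∫_a^b t^{η₁/2 - 1} (1 - t)^{η₂/2 - 1} dt ≤ K · ( ∫_a^b t^{p·η₁/2 - 1} (1 - t)^{p·η₂/2 - 1} dt )^{1/p}. -/
open MeasureTheory Real Set

open scoped NNReal ENNReal

/-!
Let `w t = t ^ (η₁ / 2) * (1 - t) ^ (η₂ / 2)` and `dμ = w t / (t * (1 - t)) dt`. The claim is that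
`∫ w ^ (p - 1) dμ` over a set `s` dominates a multiple of `(μ s) ^ p`. On the left half of `(0, 1)`,
`w` and `μ` are comparable to `u = t ^ (η₁ / 2)` and `|du|`, and symmetrically on the right half, so
`μ {w < c} ≤ C * c`. Hence at least half of the mass of `s` lies where `w ≥ μ s / (2 * C)`, and
Markov's inequality gives the claim.
-/

section WeakType

variable {α : Type*} {m : MeasurableSpace α} {μ : Measure α} {w : α → ℝ≥0∞} {C : ℝ≥0} {p : ℝ}

lemma mul_rpow_le_lintegral_of_measure_lt_le {c : ℝ≥0} (hw : AEMeasurable w μ) (hp : 1 ≤ p)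
    (hlt : μ {x | w x < c} ≤ C * c) (huniv : 2 * (C * c) ≤ μ univ) :
    C * (c : ℝ≥0∞) ^ p ≤ ∫⁻ x, w x ^ (p - 1) ∂μ := by
  have hp' : 0 ≤ p - 1 := sub_nonneg.2 hp
  have hge : C * c ≤ μ {x | c ≤ w x} := by
    refine ENNReal.le_of_add_le_add_left (a := C * c) (by finiteness) ?_
    calc (C * c + C * c : ℝ≥0∞) ≤ μ univ := by rwa [← two_mul]
      _ ≤ μ {x | w x < c} + μ {x | c ≤ w x} :=
        (measure_mono fun x _ => lt_or_ge (w x) c).trans (measure_union_le _ _)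
      _ ≤ C * c + μ {x | c ≤ w x} := by gcongr
  calc C * (c : ℝ≥0∞) ^ p = (c : ℝ≥0∞) ^ (p - 1) * (C * c) := by
        rw [mul_left_comm]
        nth_rw 3 [← ENNReal.rpow_one (c : ℝ≥0∞)]
        rw [← ENNReal.rpow_add_of_nonneg _ _ hp' zero_le_one, sub_add_cancel]
    _ ≤ (c : ℝ≥0∞) ^ (p - 1) * μ {x | (c : ℝ≥0∞) ^ (p - 1) ≤ w x ^ (p - 1)} := by
        gcongr
        exact hge.trans (measure_mono fun x hx => ENNReal.rpow_le_rpow hx hp')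
    _ ≤ ∫⁻ x, w x ^ (p - 1) ∂μ := mul_meas_ge_le_lintegral₀ (hw.pow_const _) _

lemma measure_univ_le_of_measure_lt_le (hw : AEMeasurable w μ) (hp : 1 ≤ p) (hC : 0 < C)
    (h : ∀ c : ℝ≥0, μ {x | w x < c} ≤ C * c) :
    μ univ ≤ (2 * C ^ (1 - 1 / p) : ℝ≥0) * (∫⁻ x, w x ^ (p - 1) ∂μ) ^ (1 / p) := by
  have hp0 : 0 < p := zero_lt_one.trans_le hp
  refine ENNReal.le_of_forall_nnreal_lt fun r hr => ?_
  obtain ⟨c, rfl⟩ : ∃ c, r = 2 * (C * c) := ⟨r / (2 * C), by field_simp⟩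
  have hmarkov : C * (c : ℝ≥0∞) ^ p ≤ ∫⁻ x, w x ^ (p - 1) ∂μ :=
    mul_rpow_le_lintegral_of_measure_lt_le hw hp (h c) (by exact_mod_cast hr.le)
  have hscale : 2 * (C * c) = 2 * C ^ (1 - 1 / p) * (C * c ^ p) ^ (1 / p) := by
    rw [NNReal.mul_rpow, ← NNReal.rpow_mul, mul_one_div_cancel hp0.ne', NNReal.rpow_one, mul_assoc,
      ← mul_assoc (C ^ _), ← NNReal.rpow_add hC.ne', sub_add_cancel, NNReal.rpow_one]
  calc ((2 * (C * c) : ℝ≥0) : ℝ≥0∞)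
      = (2 * C ^ (1 - 1 / p) : ℝ≥0) * (C * (c : ℝ≥0∞) ^ p) ^ (1 / p) := by
        rw [hscale, ENNReal.coe_mul, ENNReal.coe_rpow_of_nonneg _ (by positivity),
          ENNReal.coe_mul C, ENNReal.coe_rpow_of_nonneg c hp0.le]
    _ ≤ (2 * C ^ (1 - 1 / p) : ℝ≥0) * (∫⁻ x, w x ^ (p - 1) ∂μ) ^ (1 / p) := by gcongr

lemma lintegral_le_of_setLIntegral_lt_le {g : α → ℝ≥0∞} (hg : Measurable g) (hw : Measurable w)
    (hp : 1 ≤ p) (hC : 0 < C) (h : ∀ c : ℝ≥0, ∫⁻ x in {x | w x < c}, g x ∂μ ≤ C * c) :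
    ∫⁻ x, g x ∂μ ≤
      (2 * C ^ (1 - 1 / p) : ℝ≥0) * (∫⁻ x, g x * w x ^ (p - 1) ∂μ) ^ (1 / p) := by
  have hweak : ∀ c : ℝ≥0, μ.withDensity g {x | w x < c} ≤ C * c := fun c =>
    (withDensity_apply g (measurableSet_lt hw measurable_const)).trans_le (h c)
  simpa [lintegral_withDensity_eq_lintegral_mul μ hg (hw.pow_const (p - 1))] using
    measure_univ_le_of_measure_lt_le hw.aemeasurable hp hC hweak

end WeakType

lemma setLIntegral_rpow_sub_one_le {s : ℝ} (hs : s ≠ 0) (c : ℝ) :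
    ∫⁻ t in {t | 0 < t ∧ t ^ s < c}, ENNReal.ofReal (t ^ (s - 1)) ≤ ENNReal.ofReal (c / |s|) := by
  set A : Set ℝ := {t | 0 < t ∧ t ^ s < c}
  have hA : MeasurableSet A := by measurability
  have hderiv : ∀ t ∈ A, HasDerivWithinAt (· ^ s) (s * t ^ (s - 1)) A t := fun t ht =>
    (hasDerivAt_rpow_const (Or.inl ht.1.ne')).hasDerivWithinAt
  have hinj : InjOn (· ^ s) A := (rpow_left_injOn hs).mono fun t ht => ht.1.le
  have himage : (· ^ s) '' A ⊆ Ioo 0 c := by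
    rintro _ ⟨t, ht, rfl⟩
    exact ⟨rpow_pos_of_pos ht.1 s, ht.2⟩
  have hvolume : ENNReal.ofReal |s| * ∫⁻ t in A, ENNReal.ofReal (t ^ (s - 1))
      = volume ((· ^ s) '' A) := by
    rw [← setLIntegral_one, lintegral_image_eq_lintegral_abs_deriv_mul hA hderiv hinj,
      ← lintegral_const_mul' _ _ ENNReal.ofReal_ne_top]
    refine setLIntegral_congr_fun hA fun t ht => ?_
    simp only [mul_one, abs_mul, abs_of_pos (rpow_pos_of_pos ht.1 (s - 1)),
      ENNReal.ofReal_mul (abs_nonneg s)]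
  have hs' : 0 < |s| := abs_pos.2 hs
  rw [ENNReal.ofReal_div_of_pos hs', ENNReal.le_div_iff_mul_le (by simp [hs]) (by simp), mul_comm,
    hvolume]
  simpa using measure_mono (μ := volume) himage

lemma rpow_le_rpow_abs {b x : ℝ} (hx : 0 < x) (hbx : b⁻¹ ≤ x) (hxb : x ≤ b) (r : ℝ) :
    x ^ r ≤ b ^ |r| := by
  have hb : 0 < b := hx.trans_le hxb
  rcases abs_cases r with ⟨hr, h0⟩ | ⟨hr, h0⟩ <;> rw [hr]
  · gcongr
  · rw [rpow_neg hb.le, ← inv_rpow hb.le]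
    exact rpow_le_rpow_of_nonpos (inv_pos.2 hb) hbx h0.le

/-- The unnormalized beta weight `t ^ u * (1 - t) ^ v` on `(0, 1)`; the exponents are those of the
factors themselves, not the parameters `u + 1`, `v + 1` of the beta distribution. -/
noncomputable def betaWeight (u v t : ℝ) : ℝ := t ^ u * (1 - t) ^ v

namespace betaWeight

variable {s₁ s₂ t : ℝ}

lemma pos (u v : ℝ) (ht : t ∈ Ioo 0 1) : 0 < betaWeight u v t :=
  mul_pos (rpow_pos_of_pos ht.1 u) (rpow_pos_of_pos (sub_pos.2 ht.2) v)

lemma measurable (u v : ℝ) : Measurable (betaWeight u v) := by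
  unfold betaWeight
  fun_prop

lemma one_sub (u v t : ℝ) : betaWeight u v (1 - t) = betaWeight v u t := by
  rw [betaWeight, betaWeight, sub_sub_cancel, mul_comm]

lemma mul_rpow (u v u' v' q : ℝ) (ht : t ∈ Ioo 0 1) :
    betaWeight u v t * betaWeight u' v' t ^ q = betaWeight (u + u' * q) (v + v' * q) t := by
  have ht' : 0 < 1 - t := sub_pos.2 ht.2
  simp only [betaWeight]
  rw [Real.mul_rpow (rpow_nonneg ht.1.le _) (rpow_nonneg ht'.le _), rpow_add ht.1, rpow_add ht',
    ← rpow_mul ht.1.le, ← rpow_mul ht'.le]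
  ring

lemma le_two_rpow_mul_rpow (u v : ℝ) (ht : t ∈ Ioc 0 (1 / 2)) :
    betaWeight u v t ≤ 2 ^ |v| * t ^ u := by
  obtain ⟨h0, h1⟩ := ht
  rw [betaWeight, mul_comm]
  gcongr
  exact rpow_le_rpow_abs (by linarith) (by linarith) (by linarith) v

lemma rpow_le_two_rpow_mul (u v : ℝ) (ht : t ∈ Ioc 0 (1 / 2)) :
    t ^ u ≤ 2 ^ |v| * betaWeight u v t := by
  obtain ⟨h0, h1⟩ := ht
  have h1' : 0 < 1 - t := by linarith
  calc t ^ u = (1 - t) ^ (-v) * betaWeight u v t := by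
        rw [betaWeight, rpow_neg h1'.le]
        field_simp
    _ ≤ 2 ^ |v| * betaWeight u v t := by
        rw [← abs_neg v]
        exact mul_le_mul_of_nonneg_right
          (rpow_le_rpow_abs h1' (by linarith) (by linarith) (-v)) (pos u v ⟨h0, by linarith⟩).le

lemma exists_setLIntegral_Ioc_half_lt_le (hs₁ : s₁ ≠ 0) (s₂ : ℝ) :
    ∃ C : ℝ≥0, 0 < C ∧ ∀ c : ℝ≥0,
      ∫⁻ t in {t | t ∈ Ioc 0 (1 / 2) ∧ betaWeight s₁ s₂ t < c},
        ENNReal.ofReal (betaWeight (s₁ - 1) (s₂ - 1) t) ≤ C * c := by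
  refine ⟨(2 ^ |s₂ - 1| * (2 ^ |s₂| / |s₁|)).toNNReal,
    Real.toNNReal_pos.2 (by positivity), fun c => ?_⟩
  set A : Set ℝ := {t | t ∈ Ioc 0 (1 / 2) ∧ betaWeight s₁ s₂ t < c}
  have hA : MeasurableSet A :=
    measurableSet_Ioc.inter (measurableSet_lt (measurable s₁ s₂) measurable_const)
  have hsub : A ⊆ {t | 0 < t ∧ t ^ s₁ < 2 ^ |s₂| * c} := fun t ht =>
    ⟨ht.1.1, (rpow_le_two_rpow_mul s₁ s₂ ht.1).trans_lt (by gcongr; exact ht.2)⟩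
  calc ∫⁻ t in A, ENNReal.ofReal (betaWeight (s₁ - 1) (s₂ - 1) t)
      ≤ ∫⁻ t in A, ENNReal.ofReal (2 ^ |s₂ - 1|) * ENNReal.ofReal (t ^ (s₁ - 1)) := by
        refine setLIntegral_mono' hA fun t ht => ?_
        rw [← ENNReal.ofReal_mul (by positivity)]
        exact ENNReal.ofReal_le_ofReal (le_two_rpow_mul_rpow _ _ ht.1)
    _ = ENNReal.ofReal (2 ^ |s₂ - 1|) * ∫⁻ t in A, ENNReal.ofReal (t ^ (s₁ - 1)) :=
        lintegral_const_mul' _ _ ENNReal.ofReal_ne_top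
    _ ≤ ENNReal.ofReal (2 ^ |s₂ - 1|) * ENNReal.ofReal (2 ^ |s₂| * c / |s₁|) := by
        gcongr
        exact (lintegral_mono_set hsub).trans (setLIntegral_rpow_sub_one_le hs₁ _)
    _ = ENNReal.ofReal (2 ^ |s₂ - 1| * (2 ^ |s₂| / |s₁|)) * c := by
        rw [← ENNReal.ofReal_coe_nnreal (p := c), ← ENNReal.ofReal_mul (by positivity),
          ← ENNReal.ofReal_mul (by positivity)]
        ring_nf

lemma setLIntegral_preimage_one_sub (u v : ℝ) (A : Set ℝ) :
    ∫⁻ t in (1 - ·) ⁻¹' A, ENNReal.ofReal (betaWeight u v t)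
      = ∫⁻ t in A, ENNReal.ofReal (betaWeight v u t) := by
  simpa only [one_sub] using
    (Measure.measurePreserving_sub_left volume (1 : ℝ)).setLIntegral_comp_preimage_emb
      (Homeomorph.subLeft (1 : ℝ)).measurableEmbedding
      (fun t => ENNReal.ofReal (betaWeight v u t)) A

lemma exists_setLIntegral_lt_le (hs₁ : s₁ ≠ 0) (hs₂ : s₂ ≠ 0) :
    ∃ C : ℝ≥0, 0 < C ∧ ∀ c : ℝ≥0,
      ∫⁻ t in {t | t ∈ Ioo 0 1 ∧ betaWeight s₁ s₂ t < c},
        ENNReal.ofReal (betaWeight (s₁ - 1) (s₂ - 1) t) ≤ C * c := by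
  obtain ⟨C₁, hC₁, hle₁⟩ := exists_setLIntegral_Ioc_half_lt_le hs₁ s₂
  obtain ⟨C₂, hC₂, hle₂⟩ := exists_setLIntegral_Ioc_half_lt_le hs₂ s₁
  refine ⟨C₁ + C₂, by positivity, fun c => ?_⟩
  set L : Set ℝ := {t | t ∈ Ioc 0 (1 / 2) ∧ betaWeight s₁ s₂ t < c}
  set R : Set ℝ := {t | t ∈ Ioc 0 (1 / 2) ∧ betaWeight s₂ s₁ t < c}
  have hcover : {t | t ∈ Ioo 0 1 ∧ betaWeight s₁ s₂ t < c} ⊆ L ∪ (1 - ·) ⁻¹' R := by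
    rintro t ⟨⟨h0, h1⟩, htc⟩
    rcases le_total t (1 / 2) with h | h
    · exact Or.inl ⟨⟨h0, h⟩, htc⟩
    · exact Or.inr ⟨⟨sub_pos.2 h1, by linarith⟩, by rwa [one_sub]⟩
  refine (lintegral_mono_set hcover).trans ((lintegral_union_le _ _ _).trans ?_)
  rw [setLIntegral_preimage_one_sub, ENNReal.coe_add, add_mul]
  exact add_le_add (hle₁ c) (hle₂ c)

end betaWeight

theorem appell_inequality_spherical_general {η₁ η₂ p : ℝ} (hη₁ : η₁ ≠ 0) (hη₂ : η₂ ≠ 0)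
    (hp : 1 ≤ p) :
    ∃ K : ℝ, 0 < K ∧
      ∀ s ⊆ Ioo (0 : ℝ) 1,
        (∫⁻ t in s, ENNReal.ofReal (t ^ (η₁ / 2 - 1) * (1 - t) ^ (η₂ / 2 - 1))) ≤
        ENNReal.ofReal K *
          (∫⁻ t in s,
            ENNReal.ofReal (t ^ (p * η₁ / 2 - 1) * (1 - t) ^ (p * η₂ / 2 - 1))) ^ (1 / p) := by
  obtain ⟨C, hC, hle⟩ :=
    betaWeight.exists_setLIntegral_lt_le (s₁ := η₁ / 2) (s₂ := η₂ / 2)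
      (by simpa) (by simpa)
  refine ⟨(2 * C ^ (1 - 1 / p) : ℝ≥0), by positivity, fun s hs => ?_⟩
  set g : ℝ → ℝ≥0∞ := fun t => ENNReal.ofReal (betaWeight (η₁ / 2 - 1) (η₂ / 2 - 1) t)
  set w : ℝ → ℝ≥0∞ := fun t => ENNReal.ofReal (betaWeight (η₁ / 2) (η₂ / 2) t)
  have hg : Measurable g := (betaWeight.measurable _ _).ennreal_ofReal
  have hw : Measurable w := (betaWeight.measurable _ _).ennreal_ofReal
  have hweak : ∀ c : ℝ≥0, ∫⁻ t in {t | w t < c}, g t ∂volume.restrict s ≤ C * c := fun c => by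
    rw [Measure.restrict_restrict (measurableSet_lt hw measurable_const)]
    refine (lintegral_mono_set fun t ht => ?_).trans (hle c)
    exact ⟨hs ht.2, (ENNReal.ofReal_lt_coe_iff (betaWeight.pos _ _ (hs ht.2)).le).1 ht.1⟩
  have hpow : ∫⁻ t in s, g t * w t ^ (p - 1) = ∫⁻ t in s,
      ENNReal.ofReal (t ^ (p * η₁ / 2 - 1) * (1 - t) ^ (p * η₂ / 2 - 1)) := by
    refine lintegral_congr_ae (ae_restrict_of_ae_restrict_of_subset hs ?_)
    filter_upwards [ae_restrict_mem measurableSet_Ioo] with t ht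
    rw [ENNReal.ofReal_rpow_of_nonneg (betaWeight.pos _ _ ht).le (sub_nonneg.2 hp),
      ← ENNReal.ofReal_mul (betaWeight.pos _ _ ht).le, betaWeight.mul_rpow _ _ _ _ _ ht, betaWeight]
    ring_nf
  rw [ENNReal.ofReal_coe_nnreal, ← hpow]
  exact lintegral_le_of_setLIntegral_lt_le hg hw hp hC hweak

theorem appell_inequality_spherical (η₁ η₂ p : ℝ) (hη₁ : 0 < η₁) (hη₂ : 0 < η₂) (hp : 1 ≤ p) :
    ∃ K : ℝ, 0 < K ∧
      ∀ a b : ℝ, 0 < a → a < b → b < 1 →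
        (∫⁻ t in Set.Ioo a b,
            ENNReal.ofReal (t ^ (η₁ / 2 - 1) * (1 - t) ^ (η₂ / 2 - 1))) ≤
        ENNReal.ofReal K *
          (∫⁻ t in Set.Ioo a b,
            ENNReal.ofReal (t ^ (p * η₁ / 2 - 1) * (1 - t) ^ (p * η₂ / 2 - 1))) ^ (1 / p) := by
  obtain ⟨K, hK, hle⟩ := appell_inequality_spherical_general hη₁.ne' hη₂.ne' hp
  exact ⟨K, hK, fun a b ha _ hb => hle _ (Ioo_subset_Ioo ha.le hb.le)⟩
end

section
/- Let η₁, η₂ > 0 and p ≥ 1. Then there exists a constant K > 0, depending only on p, η₁ and η₂, such that for all real numbers 0 < a < b < ∞, ∫_a^b t^{(η₁ - 1)/2} (1 + t)^{(η₂ - 1)/2} dt ≤ K · ( ∫_a^b t^{(p·η₁ - 1)/2} (1 + t)^{(p·η₂ - 1)/2} dt )^{1/p}. -/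
open MeasureTheory Real Set

/-! With `w = t ^ (η₁ / 2) * (1 + t) ^ (η₂ / 2)`, the two integrands are `f = w / √(t (1 + t))` and
`w ^ (p - 1) * f`. Since `w' / f = (η₁ + (η₁ + η₂) t) / (2 √(t (1 + t)))`, we have `κ f ≤ w'` for
`κ = min η₁ (η₁ + η₂) / 2`, so the primitive `Φ` of `f` vanishing at `a` satisfies `Φ ≤ w / κ`.
Integrating `(Φ ^ p)' = p Φ ^ (p - 1) f ≤ p (w / κ) ^ (p - 1) f` over `(a, b)` gives the inequality,
with `K ^ p = p κ ^ (1 - p)`. -/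

theorem rpow_integral_le_integral_of_integral_le {f w : ℝ → ℝ} {a b p : ℝ} (hp : 1 ≤ p)
    (hab : a ≤ b) (hf : ContinuousOn f (Icc a b)) (hf₀ : ∀ x ∈ Icc a b, 0 ≤ f x)
    (hfw : ∀ x ∈ Ioo a b, ∫ t in a..x, f t ≤ w x)
    (hint : IntegrableOn (fun x => p * w x ^ (p - 1) * f x) (Icc a b)) :
    (∫ t in a..b, f t) ^ p ≤ ∫ t in a..b, p * w t ^ (p - 1) * f t := by
  have hcont : ContinuousOn (fun x => ∫ t in a..x, f t) (Icc a b) :=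
    (intervalIntegral.continuousOn_primitive_interval
      (uIcc_of_le hab ▸ hf.integrableOn_Icc)).mono (uIcc_of_le hab).ge
  have hderiv : ∀ x ∈ Ioo a b, HasDerivAt (fun x => ∫ t in a..x, f t) (f x) x := fun x hx =>
    intervalIntegral.integral_hasDerivAt_right
      ((hf.mono (Icc_subset_Icc_right hx.2.le)).intervalIntegrable_of_Icc hx.1.le)
      ((hf.mono Ioo_subset_Icc_self).stronglyMeasurableAtFilter isOpen_Ioo x hx)
      (hf.continuousAt (Icc_mem_nhds hx.1 hx.2))
  have hbound : ∀ x ∈ Ioo a b,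
      f x * p * (∫ t in a..x, f t) ^ (p - 1) ≤ p * w x ^ (p - 1) * f x := fun x hx => by
    have hfx : 0 ≤ f x := hf₀ x (Ioo_subset_Icc_self hx)
    have hΦ : 0 ≤ ∫ t in a..x, f t := intervalIntegral.integral_nonneg hx.1.le fun t ht =>
      hf₀ t ⟨ht.1, ht.2.trans hx.2.le⟩
    calc f x * p * (∫ t in a..x, f t) ^ (p - 1) = p * (∫ t in a..x, f t) ^ (p - 1) * f x := by ring
      _ ≤ p * w x ^ (p - 1) * f x := by
        gcongr
        exact hfw x hx
  have hp₀ : p ≠ 0 := by positivity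
  simpa [zero_rpow hp₀] using intervalIntegral.sub_le_integral_of_hasDeriv_right_of_le hab
    (hcont.rpow_const fun _ _ => Or.inr (by positivity))
    (fun x hx => ((hderiv x hx).rpow_const (Or.inr hp)).hasDerivWithinAt) hint hbound

theorem lintegral_ofReal_le_mul_rpow_of_rpow_integral_le {X : Type*} [MeasurableSpace X]
    {μ : Measure X} {f g : X → ℝ} {C p : ℝ} (hp : 0 < p) (hC : 0 ≤ C)
    (hf : Integrable f μ) (hf₀ : 0 ≤ᵐ[μ] f) (hg : Integrable g μ) (hg₀ : 0 ≤ᵐ[μ] g)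
    (h : (∫ x, f x ∂μ) ^ p ≤ C * ∫ x, g x ∂μ) :
    ∫⁻ x, ENNReal.ofReal (f x) ∂μ ≤
      ENNReal.ofReal (C ^ (1 / p)) * (∫⁻ x, ENNReal.ofReal (g x) ∂μ) ^ (1 / p) := by
  have hf_int : 0 ≤ ∫ x, f x ∂μ := integral_nonneg_of_ae hf₀
  have hg_int : 0 ≤ ∫ x, g x ∂μ := integral_nonneg_of_ae hg₀
  rw [← ofReal_integral_eq_lintegral_ofReal hf hf₀, ← ofReal_integral_eq_lintegral_ofReal hg hg₀,
    ENNReal.ofReal_rpow_of_nonneg hg_int (by positivity), ← ENNReal.ofReal_mul (by positivity),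
    ← mul_rpow hC hg_int, one_div]
  exact ENNReal.ofReal_le_ofReal
    ((le_rpow_inv_iff_of_pos hf_int (mul_nonneg hC hg_int) hp).2 h)

/-- The integrand of the Euler-type integral over `(a, b)` representing Appell's function `F₁` with
parameters `β₁ = -α` and `β₂ = -β`, before `(a, b)` is rescaled to `(0, 1)`. -/
noncomputable def appellKernel (α β t : ℝ) : ℝ := t ^ α * (1 + t) ^ β

namespace appellKernel

variable {α β γ δ κ a b p t : ℝ}

theorem pos (ht : 0 < t) : 0 < appellKernel α β t := by
  unfold appellKernel
  positivity

theorem mul_eq (ht : 0 < t) :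
    appellKernel α β t * appellKernel γ δ t = appellKernel (α + γ) (β + δ) t := by
  simp only [appellKernel, rpow_add ht, rpow_add (by positivity : 0 < 1 + t)]
  ring

theorem rpow_eq (ht : 0 < t) (p : ℝ) : appellKernel α β t ^ p = appellKernel (α * p) (β * p) t := by
  have ht₁ : 0 ≤ 1 + t := by positivity
  rw [appellKernel, appellKernel, mul_rpow (by positivity) (by positivity), rpow_mul ht.le,
    rpow_mul ht₁]

theorem hasDerivAt (ht : 0 < t) :
    HasDerivAt (appellKernel α β) ((α + (α + β) * t) * appellKernel (α - 1) (β - 1) t) t := by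
  have ht₁ : 0 < 1 + t := by positivity
  refine ((hasDerivAt_rpow_const (p := α) (Or.inl ht.ne')).mul
    (((hasDerivAt_id t).const_add 1).rpow_const (p := β) (Or.inl ht₁.ne'))).congr_deriv ?_
  simp only [appellKernel, rpow_sub_one ht.ne', rpow_sub_one ht₁.ne', id]
  field_simp
  ring

theorem continuousOn_Icc (ha : 0 < a) : ContinuousOn (appellKernel α β) (Icc a b) := fun _ ht =>
  (hasDerivAt (ha.trans_le ht.1)).continuousAt.continuousWithinAt

theorem integrableOn_Ioo (ha : 0 < a) : IntegrableOn (appellKernel α β) (Ioo a b) :=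
  (continuousOn_Icc ha).integrableOn_Icc.mono_set Ioo_subset_Icc_self

theorem ae_nonneg_Ioo (ha : 0 < a) : 0 ≤ᵐ[volume.restrict (Ioo a b)] appellKernel α β := by
  filter_upwards [ae_restrict_mem measurableSet_Ioo] with t ht
  exact (pos (ha.trans ht.1)).le

theorem sub_half_le_one_add_mul_sub_one (ht : 0 < t) :
    appellKernel (α - 1 / 2) (β - 1 / 2) t ≤ (1 + t) * appellKernel (α - 1) (β - 1) t := by
  have hsqrt : appellKernel (1 / 2) (1 / 2) t ≤ 1 + t := by
    rw [appellKernel, ← sqrt_eq_rpow, ← sqrt_eq_rpow]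
    calc √t * √(1 + t) ≤ √(1 + t) * √(1 + t) := by gcongr; linarith
      _ = 1 + t := mul_self_sqrt (by positivity)
  calc appellKernel (α - 1 / 2) (β - 1 / 2) t
      = appellKernel (1 / 2) (1 / 2) t * appellKernel (α - 1) (β - 1) t := by
        rw [mul_eq ht]; congr 1 <;> ring
    _ ≤ (1 + t) * appellKernel (α - 1) (β - 1) t := by gcongr; exact (pos ht).le

theorem mul_sub_half_le_deriv (hκ : 0 ≤ κ) (hκα : κ ≤ α) (hκαβ : κ ≤ α + β) (ht : 0 < t) :
    κ * appellKernel (α - 1 / 2) (β - 1 / 2) t ≤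
      (α + (α + β) * t) * appellKernel (α - 1) (β - 1) t :=
  calc κ * appellKernel (α - 1 / 2) (β - 1 / 2) t
      ≤ κ * ((1 + t) * appellKernel (α - 1) (β - 1) t) := by
        gcongr
        exact sub_half_le_one_add_mul_sub_one ht
    _ = (κ + κ * t) * appellKernel (α - 1) (β - 1) t := by ring
    _ ≤ (α + (α + β) * t) * appellKernel (α - 1) (β - 1) t := by gcongr; exact (pos ht).le

theorem integral_sub_half_le_div (hκ : 0 < κ) (hκα : κ ≤ α) (hκαβ : κ ≤ α + β) (ha : 0 < a)
    (hab : a ≤ b) :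
    ∫ t in a..b, appellKernel (α - 1 / 2) (β - 1 / 2) t ≤ appellKernel α β b / κ := by
  have hderiv : ∀ t ∈ Ioo a b, HasDerivWithinAt (appellKernel α β)
      ((α + (α + β) * t) * appellKernel (α - 1) (β - 1) t) (Ioi t) t := fun t ht =>
    (hasDerivAt (ha.trans ht.1)).hasDerivWithinAt
  have hle := intervalIntegral.integral_le_sub_of_hasDeriv_right_of_le hab
    (continuousOn_Icc ha) hderiv ((continuousOn_Icc ha).integrableOn_Icc.const_mul κ)
    fun t ht => mul_sub_half_le_deriv hκ.le hκα hκαβ (ha.trans ht.1)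
  rw [intervalIntegral.integral_const_mul] at hle
  rw [le_div_iff₀' hκ]
  exact hle.trans (sub_le_self _ (pos ha).le)

theorem div_rpow_mul_sub_half (hκ : 0 < κ) (ht : 0 < t) :
    p * (appellKernel α β t / κ) ^ (p - 1) * appellKernel (α - 1 / 2) (β - 1 / 2) t =
      p / κ ^ (p - 1) * appellKernel (p * α - 1 / 2) (p * β - 1 / 2) t := by
  have hmul : appellKernel (p * α - 1 / 2) (p * β - 1 / 2) t =
      appellKernel α β t ^ (p - 1) * appellKernel (α - 1 / 2) (β - 1 / 2) t := by
    rw [rpow_eq ht, mul_eq ht]; congr 1 <;> ring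
  rw [hmul, div_rpow (pos ht).le hκ.le]
  ring

theorem rpow_integral_sub_half_le (hκ : 0 < κ) (hκα : κ ≤ α) (hκαβ : κ ≤ α + β) (hp : 1 ≤ p)
    (ha : 0 < a) (hab : a ≤ b) :
    (∫ t in a..b, appellKernel (α - 1 / 2) (β - 1 / 2) t) ^ p ≤
      p / κ ^ (p - 1) * ∫ t in a..b, appellKernel (p * α - 1 / 2) (p * β - 1 / 2) t := by
  have heq : EqOn
      (fun t => p * (appellKernel α β t / κ) ^ (p - 1) * appellKernel (α - 1 / 2) (β - 1 / 2) t)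
      (fun t => p / κ ^ (p - 1) * appellKernel (p * α - 1 / 2) (p * β - 1 / 2) t) (Icc a b) :=
    fun t ht => div_rpow_mul_sub_half hκ (ha.trans_le ht.1)
  have hint := (integrableOn_congr_fun (μ := volume) heq measurableSet_Icc).2
    ((continuousOn_Icc ha).integrableOn_Icc.const_mul (p / κ ^ (p - 1)))
  calc (∫ t in a..b, appellKernel (α - 1 / 2) (β - 1 / 2) t) ^ p
      ≤ ∫ t in a..b,
          p * (appellKernel α β t / κ) ^ (p - 1) * appellKernel (α - 1 / 2) (β - 1 / 2) t :=
        rpow_integral_le_integral_of_integral_le hp hab (continuousOn_Icc ha)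
          (fun t ht => (pos (ha.trans_le ht.1)).le)
          (fun t ht => integral_sub_half_le_div hκ hκα hκαβ ha ht.1.le) hint
    _ = ∫ t in a..b, p / κ ^ (p - 1) * appellKernel (p * α - 1 / 2) (p * β - 1 / 2) t :=
        intervalIntegral.integral_congr (uIcc_of_le hab ▸ heq)
    _ = p / κ ^ (p - 1) * ∫ t in a..b, appellKernel (p * α - 1 / 2) (p * β - 1 / 2) t :=
        intervalIntegral.integral_const_mul _ _

end appellKernel

theorem appell_inequality_hyperbolic_general (η₁ η₂ p : ℝ) (hη₁ : 0 < η₁) (hη : 0 < η₁ + η₂)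
    (hp : 1 ≤ p) :
    ∃ K : ℝ, 0 < K ∧
      ∀ a b : ℝ, 0 < a → a < b →
        (∫⁻ t in Set.Ioo a b,
            ENNReal.ofReal (t ^ ((η₁ - 1) / 2) * (1 + t) ^ ((η₂ - 1) / 2))) ≤
        ENNReal.ofReal K *
          (∫⁻ t in Set.Ioo a b,
            ENNReal.ofReal (t ^ ((p * η₁ - 1) / 2) * (1 + t) ^ ((p * η₂ - 1) / 2))) ^ (1 / p) := by
  obtain ⟨κ, hκ, hκ₁, hκ₂⟩ : ∃ κ, 0 < κ ∧ κ ≤ η₁ / 2 ∧ κ ≤ η₁ / 2 + η₂ / 2 :=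
    ⟨min (η₁ / 2) (η₁ / 2 + η₂ / 2), lt_min (by linarith) (by linarith), min_le_left _ _,
      min_le_right _ _⟩
  refine ⟨(p / κ ^ (p - 1)) ^ (1 / p), by positivity, fun a b ha hab => ?_⟩
  have hreal := appellKernel.rpow_integral_sub_half_le hκ hκ₁ hκ₂ hp ha hab.le
  simp only [intervalIntegral.integral_of_le hab.le, integral_Ioc_eq_integral_Ioo] at hreal
  have hlint := lintegral_ofReal_le_mul_rpow_of_rpow_integral_le (by positivity) (by positivity)
    (appellKernel.integrableOn_Ioo ha) (appellKernel.ae_nonneg_Ioo ha)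
    (appellKernel.integrableOn_Ioo ha) (appellKernel.ae_nonneg_Ioo ha) hreal
  simpa only [appellKernel, sub_div, mul_div_assoc] using hlint

theorem appell_inequality_hyperbolic (η₁ η₂ p : ℝ) (hη₁ : 0 < η₁) (hη₂ : 0 < η₂) (hp : 1 ≤ p) :
    ∃ K : ℝ, 0 < K ∧
      ∀ a b : ℝ, 0 < a → a < b →
        (∫⁻ t in Set.Ioo a b,
            ENNReal.ofReal (t ^ ((η₁ - 1) / 2) * (1 + t) ^ ((η₂ - 1) / 2))) ≤
        ENNReal.ofReal K *
          (∫⁻ t in Set.Ioo a b,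
            ENNReal.ofReal (t ^ ((p * η₁ - 1) / 2) * (1 + t) ^ ((p * η₂ - 1) / 2))) ^ (1 / p) :=
  appell_inequality_hyperbolic_general η₁ η₂ p hη₁ (add_pos hη₁ hη₂) hp
end

section
/- Let η₁, η₂ > 0 and p ≥ 1. Then there exists a constant K > 0, depending only on p, η₁ and η₂, such that for all real numbers 0 < b < 1, ∫_0^b t^{η₁/2 - 1} (1 - t)^{η₂/2 - 1} dt ≤ K · ( ∫_0^b t^{p·η₁/2 - 1} (1 - t)^{p·η₂/2 - 1} dt )^{1/p}. -/
open MeasureTheory Real Set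

/-!
The substitution `t = b s` turns the incomplete beta integral `B(b; a, c)` into
`b ^ a * ∫ s in (0, 1), s ^ (a - 1) * (1 - b s) ^ (c - 1)`. Since `1 - s ≤ 1 - b s ≤ 1`, the factor
`(1 - b s) ^ (c - 1)` lies between `(1 - s) ^ (max c 1 - 1)` and `(1 - s) ^ (min c 1 - 1)`, so
`B(b; a, c)` is comparable to `b ^ a` up to complete beta integrals. Both sides of the inequality
are therefore of order `b ^ (η₁ / 2)`, uniformly in `b`.
-/

open ProbabilityTheory
open scoped ENNReal

section Rpow

variable {x y : ℝ}

lemma rpow_le_rpow_min_zero (hx : 0 < x) (hxy : x ≤ y) (hy : y ≤ 1) (u : ℝ) :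
    y ^ u ≤ x ^ min u 0 :=
  (rpow_le_rpow_of_exponent_ge (hx.trans_le hxy) hy (min_le_left u 0)).trans
    (rpow_le_rpow_of_nonpos hx hxy (min_le_right u 0))

lemma rpow_max_zero_le_rpow (hx : 0 < x) (hxy : x ≤ y) (hy : y ≤ 1) (u : ℝ) :
    x ^ max u 0 ≤ y ^ u :=
  (rpow_le_rpow hx.le hxy (le_max_right u 0)).trans
    (rpow_le_rpow_of_exponent_ge (hx.trans_le hxy) hy (le_max_left u 0))

end Rpow

lemma lintegral_image_const_mul {r : ℝ} (hr : r ≠ 0) {s : Set ℝ} (hs : MeasurableSet s)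
    (f : ℝ → ℝ≥0∞) :
    ∫⁻ x in (r * ·) '' s, f x = ENNReal.ofReal |r| * ∫⁻ x in s, f (r * x) := by
  rw [lintegral_image_eq_lintegral_abs_deriv_mul hs
      (fun x _ => (hasDerivAt_const_mul r).hasDerivWithinAt) (mul_right_injective₀ hr).injOn f,
    lintegral_const_mul' _ _ ENNReal.ofReal_ne_top]

/-- The incomplete beta integral `B(b; a, c) = ∫ t in (0, b), t ^ (a - 1) * (1 - t) ^ (c - 1)`,
valued in `ℝ≥0∞` so that it is meaningful without any condition on the exponents; it is intended
for `b ≤ 1`, where the integrand is nonnegative. -/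
noncomputable def lincompleteBeta (a c b : ℝ) : ℝ≥0∞ :=
  ∫⁻ t in Ioo 0 b, ENNReal.ofReal (t ^ (a - 1) * (1 - t) ^ (c - 1))

lemma lincompleteBeta_one {a c : ℝ} (ha : 0 < a) (hc : 0 < c) :
    lincompleteBeta a c 1 = ENNReal.ofReal (beta a c) := by
  have hβ : 0 < beta a c := beta_pos ha hc
  calc lincompleteBeta a c 1
      = ENNReal.ofReal (beta a c) * ∫⁻ t, betaPDF a c t := by
        rw [lintegral_betaPDF, ← lintegral_const_mul' _ _ ENNReal.ofReal_ne_top]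
        refine lintegral_congr fun t => ?_
        rw [← ENNReal.ofReal_mul hβ.le]
        field_simp
    _ = ENNReal.ofReal (beta a c) := by rw [lintegral_betaPDF_eq_one ha hc, mul_one]

lemma lincompleteBeta_eq_rpow_mul_lintegral (a c : ℝ) {b : ℝ} (hb : 0 < b) :
    lincompleteBeta a c b = ENNReal.ofReal (b ^ a) *
      ∫⁻ s in Ioo 0 1, ENNReal.ofReal (s ^ (a - 1) * (1 - b * s) ^ (c - 1)) := by
  have hIoo : Ioo 0 b = (b * ·) '' Ioo 0 1 := by rw [image_mul_left_Ioo hb, mul_zero, mul_one]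
  rw [lincompleteBeta, hIoo, lintegral_image_const_mul hb.ne' measurableSet_Ioo, abs_of_pos hb,
    ← lintegral_const_mul' _ _ ENNReal.ofReal_ne_top,
    ← lintegral_const_mul' _ _ ENNReal.ofReal_ne_top]
  refine setLIntegral_congr_fun measurableSet_Ioo fun s hs => ?_
  have hba : b * b ^ (a - 1) = b ^ a := by rw [rpow_sub_one hb.ne', mul_div_cancel₀ _ hb.ne']
  rw [← ENNReal.ofReal_mul hb.le, ← ENNReal.ofReal_mul (by positivity),
    mul_rpow hb.le hs.1.le, ← hba]
  ring_nf

lemma lincompleteBeta_le_rpow_mul (a c : ℝ) {b : ℝ} (hb : 0 < b) (hb₁ : b ≤ 1) :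
    lincompleteBeta a c b ≤ ENNReal.ofReal (b ^ a) * lincompleteBeta a (min c 1) 1 := by
  rw [lincompleteBeta_eq_rpow_mul_lintegral a c hb, lincompleteBeta]
  gcongr ENNReal.ofReal _ * ?_
  refine setLIntegral_mono' measurableSet_Ioo fun s ⟨hs₀, hs₁⟩ => ?_
  have hfactor : (1 - b * s) ^ (c - 1) ≤ (1 - s) ^ (min c 1 - 1) := by
    rw [← min_sub_sub_right, sub_self]
    exact rpow_le_rpow_min_zero (by linarith) (by nlinarith) (by nlinarith) _
  gcongr

lemma rpow_mul_le_lincompleteBeta (a c : ℝ) {b : ℝ} (hb : 0 < b) (hb₁ : b ≤ 1) :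
    ENNReal.ofReal (b ^ a) * lincompleteBeta a (max c 1) 1 ≤ lincompleteBeta a c b := by
  rw [lincompleteBeta_eq_rpow_mul_lintegral a c hb, lincompleteBeta]
  gcongr ENNReal.ofReal _ * ?_
  refine setLIntegral_mono' measurableSet_Ioo fun s ⟨hs₀, hs₁⟩ => ?_
  have hfactor : (1 - s) ^ (max c 1 - 1) ≤ (1 - b * s) ^ (c - 1) := by
    rw [← max_sub_sub_right, sub_self]
    exact rpow_max_zero_le_rpow (by linarith) (by nlinarith) (by nlinarith) _
  gcongr

theorem gauss_inequality_spherical_general {a c p b : ℝ} (d : ℝ) (ha : 0 < a) (hc : 0 < c)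
    (hp : 0 < p) (hb : 0 < b) (hb₁ : b ≤ 1) :
    lincompleteBeta a c b ≤
      ENNReal.ofReal (beta a (min c 1) / beta (p * a) (max d 1) ^ (1 / p)) *
        lincompleteBeta (p * a) d b ^ (1 / p) := by
  set β₁ := beta a (min c 1)
  set β₂ := beta (p * a) (max d 1)
  have hβ₁ : 0 < β₁ := beta_pos ha (by positivity)
  have hβ₂ : 0 < β₂ := beta_pos (by positivity) (by positivity)
  have hupper : lincompleteBeta a c b ≤ ENNReal.ofReal (b ^ a * β₁) := by
    rw [ENNReal.ofReal_mul (by positivity), ← lincompleteBeta_one ha (by positivity)]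
    exact lincompleteBeta_le_rpow_mul a c hb hb₁
  have hlower : ENNReal.ofReal (b ^ (p * a) * β₂) ≤ lincompleteBeta (p * a) d b := by
    rw [ENNReal.ofReal_mul (by positivity),
      ← lincompleteBeta_one (by positivity) (by positivity)]
    exact rpow_mul_le_lincompleteBeta (p * a) d hb hb₁
  have hroot : (b ^ (p * a) * β₂) ^ (1 / p) = b ^ a * β₂ ^ (1 / p) := by
    rw [mul_rpow (by positivity) hβ₂.le, ← rpow_mul hb.le]
    field_simp
  calc lincompleteBeta a c b
      ≤ ENNReal.ofReal (b ^ a * β₁) := hupper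
    _ = ENNReal.ofReal (β₁ / β₂ ^ (1 / p)) * ENNReal.ofReal (b ^ (p * a) * β₂) ^ (1 / p) := by
        rw [ENNReal.ofReal_rpow_of_pos (by positivity), hroot, ← ENNReal.ofReal_mul (by positivity)]
        field_simp
    _ ≤ ENNReal.ofReal (β₁ / β₂ ^ (1 / p)) * lincompleteBeta (p * a) d b ^ (1 / p) := by
        gcongr

theorem gauss_inequality_spherical (η₁ η₂ p : ℝ) (hη₁ : 0 < η₁) (hη₂ : 0 < η₂) (hp : 1 ≤ p) :
    ∃ K : ℝ, 0 < K ∧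
      ∀ b : ℝ, 0 < b → b < 1 →
        (∫⁻ t in Set.Ioo (0 : ℝ) b,
            ENNReal.ofReal (t ^ (η₁ / 2 - 1) * (1 - t) ^ (η₂ / 2 - 1))) ≤
        ENNReal.ofReal K *
          (∫⁻ t in Set.Ioo (0 : ℝ) b,
            ENNReal.ofReal (t ^ (p * η₁ / 2 - 1) * (1 - t) ^ (p * η₂ / 2 - 1))) ^ (1 / p) := by
  have hp₀ : 0 < p := zero_lt_one.trans_le hp
  have hβ₁ : 0 < beta (η₁ / 2) (min (η₂ / 2) 1) := beta_pos (by positivity) (by positivity)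
  have hβ₂ : 0 < beta (p * (η₁ / 2)) (max (p * η₂ / 2) 1) :=
    beta_pos (by positivity) (by positivity)
  refine ⟨_, div_pos hβ₁ (rpow_pos_of_pos hβ₂ (1 / p)), fun b hb hb₁ => ?_⟩
  rw [mul_div_assoc p η₁ 2]
  exact gauss_inequality_spherical_general (p * η₂ / 2) (by positivity) (by positivity) hp₀ hb
    hb₁.le
end
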